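/- Let R be a commutative Noetherian ring, 𝔞 an ideal of R, and M an R-module with dim_R M ≤ 2. Then M is 𝔞-cofinite if and only if Supp_R M ⊆ V(𝔞) and the R-module Ext^i_R(R/𝔞, M) is finitely generated for i = 0, 1, 2. -/

import Mathlib

open CategoryTheory

universe u

/-- The `R`-module `Ext^i_R(N, M)` for two `R`-modules (objects of `ModuleCat R`). -/
noncomputable def extObj {R : Type u} [CommRing R] (N M : ModuleCat.{u} R) (i : ℕ) :
    ModuleCat.{u} R :=
  ((Ext R (ModuleCat.{u} R) i).obj (Opposite.op N)).obj M

/-- The `R`-module `Ext^i_R(R/𝔞, M)`. -/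
noncomputable def extIdeal {R : Type u} [CommRing R] (𝔞 : Ideal R) (i : ℕ)
    (M : ModuleCat.{u} R) : ModuleCat.{u} R :=
  extObj (ModuleCat.of R (R ⧸ 𝔞)) M i

/-- An `R`-module `M` is `𝔞`-cofinite if `Supp_R M ⊆ V(𝔞)` and `Ext^i_R(R/𝔞, M)` is a finitely
generated `R`-module for every `i ≥ 0`. -/
def IsCofinite {R : Type u} [CommRing R] (𝔞 : Ideal R) (M : ModuleCat.{u} R) : Prop :=
  Module.support R M ⊆ PrimeSpectrum.zeroLocus (𝔞 : Set R) ∧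
    ∀ i : ℕ, Module.Finite R (extIdeal 𝔞 i M)

/-- The Krull dimension `dim_R M` of an `R`-module `M`: the Krull dimension of its support,
i.e. the supremum of `dim R/𝔭` over primes `𝔭` in the support of `M`. -/
noncomputable def moduleDim (R : Type u) [CommRing R] (M : Type u) [AddCommGroup M]
    [Module R M] : WithBot ℕ∞ :=
  Order.krullDim (Module.support R M)

/-- An `R`-module `M` is in `FD_{≤n}` if there is a finitely generated submodule `N ⊆ M`
with `dim_R (M/N) ≤ n`. -/
def MemFD (R : Type u) [CommRing R] (n : ℕ) (M : Type u) [AddCommGroup M] [Module R M] : Prop :=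
  ∃ N : Submodule R M, N.FG ∧ moduleDim R (M ⧸ N) ≤ (n : WithBot ℕ∞)

/-- An `R`-module `M` is `𝔞`-torsion if every element is annihilated by some power of `𝔞`. -/
def IsTorsionIdeal {R : Type u} [CommRing R] (𝔞 : Ideal R) (M : Type u) [AddCommGroup M]
    [Module R M] : Prop :=
  ∀ m : M, ∃ n : ℕ, ∀ a ∈ 𝔞 ^ n, a • m = 0

/-- The arithmetic rank of an ideal `𝔞`: the least `n` such that there exist `a₁, …, aₙ ∈ R`
with `Rad (a₁, …, aₙ) = Rad 𝔞`. -/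
noncomputable def arithRank {R : Type u} [CommRing R] (𝔞 : Ideal R) : ℕ :=
  sInf {n : ℕ | ∃ f : Fin n → R, (Ideal.span (Set.range f)).radical = 𝔞.radical}

/-!
Let `FD_{<k}` be the class of extensions of modules of dimension `< k` by finitely generated
modules. Working in the quotient of `R`-modules by the Serre class `FD_{<k}`, one shows that if
`X ∈ FD_{<k+3}` is supported in `V(𝔞)` and `Ext^i(R/𝔞, X)` vanishes for `i ≤ 2`, then it
vanishes for all `i`; finiteness is the case `k = 0`.

Multiplication by `x ∈ 𝔞` is zero on `Ext^i(R/𝔞, -)`. If `X ∈ FD_{<l+1}` and `Hom(R/𝔞, X) ∈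
FD_{<l}`, then `X/xX ∈ FD_{<l}` for general `x ∈ 𝔞`: a suitable localization makes `X` Artinian
up to a finitely generated submodule, and general elements of `𝔞` avoid the primes of a
secondary decomposition. The kernel of `x` on `X`, on the other hand, has a larger annihilator,
which calls for Noetherian induction on an ideal `𝔟` annihilating the module up to radical: the
induction ends as soon as `𝔞 ≤ 𝔟`, and otherwise a general `x ∈ 𝔞` is not in `𝔟`.

If `Ext^0` and `Ext^1` vanish at `X`, they vanish at the kernel of `x`, hence by induction every
`Ext^i` does; then `Ext^0` vanishes at the cokernel of `x`, which has smaller dimension. With three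
vanishing `Ext`s this breaks down, because `Ext^2` of the kernel is not controlled. So `X ⟶ 0` is
replaced by morphisms `f : A ⟶ B` inducing isomorphisms on `Ext^0` and `Ext^1` and a monomorphism
on `Ext^2`. The pullback `P` of `f` along `x : B ⟶ B` carries a morphism `A ⟶ P` of the same kind,
whose kernel and cokernel are moreover killed by `x`. If that morphism is an isomorphism on all
`Ext^i`, then so is `f`, because the cokernel of `(f, -x) : A ⊞ B ⟶ B` is of smaller dimension,
where two vanishing `Ext`s suffice.
-/

universe w v

/-! ### Cohomological δ-functors -/

section DeltaFunctor

open Limits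

variable {C D E : Type*} [Category* C] [Abelian C] [Category* D] [Abelian D]
  [Category* E] [Abelian E]

/-- A cohomological δ-functor in nonnegative degrees: a sequence of additive functors which is left
exact in degree zero and turns short exact sequences into long ones. Being a proposition, it asserts
the existence of connecting morphisms without fixing a natural choice of them. -/
class IsDeltaFunctor (F : ℕ → C ⥤ D) [∀ i, (F i).Additive] : Prop where
  mono_map_zero {X Y : C} (f : X ⟶ Y) [Mono f] : Mono ((F 0).map f)
  exact_map (i : ℕ) {S : ShortComplex C} (hS : S.ShortExact) : (S.map (F i)).Exact
  exists_connecting (i : ℕ) {S : ShortComplex C} (hS : S.ShortExact) :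
    ∃ (δ : (F i).obj S.X₃ ⟶ (F (i + 1)).obj S.X₁) (hδ : (F i).map S.g ≫ δ = 0)
      (hδ' : δ ≫ (F (i + 1)).map S.f = 0),
      (ShortComplex.mk _ _ hδ).Exact ∧ (ShortComplex.mk _ _ hδ').Exact

attribute [instance] IsDeltaFunctor.mono_map_zero

instance IsDeltaFunctor.comp (F : ℕ → C ⥤ D) [∀ i, (F i).Additive] [IsDeltaFunctor F]
    (L : D ⥤ E) [L.Additive] [PreservesFiniteLimits L] [PreservesFiniteColimits L] :
    IsDeltaFunctor fun i ↦ F i ⋙ L where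
  mono_map_zero f _ := inferInstanceAs (Mono (L.map ((F 0).map f)))
  exact_map i _ hS := (exact_map (F := F) i hS).map L
  exists_connecting i S hS := by
    obtain ⟨δ, hδ, hδ', h, h'⟩ := exists_connecting (F := F) i hS
    exact ⟨L.map δ, by rw [Functor.comp_map, ← L.map_comp, hδ, L.map_zero],
      by rw [Functor.comp_map, ← L.map_comp, hδ', L.map_zero], h.map L, h'.map L⟩

namespace IsDeltaFunctor

variable (F : ℕ → C ⥤ D) [∀ i, (F i).Additive] [IsDeltaFunctor F] {i : ℕ}

section ShortExact

variable {S : ShortComplex C} (hS : S.ShortExact)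
include hS

lemma epi_map_g_iff_mono_map_f :
    Epi ((F i).map S.g) ↔ Mono ((F (i + 1)).map S.f) := by
  obtain ⟨δ, hδ, hδ', h, h'⟩ := exists_connecting (F := F) i hS
  rw [h.epi_f_iff, h'.mono_g_iff]

lemma epi_map_f_iff : Epi ((F i).map S.f) ↔ (F i).map S.g = 0 :=
  (exact_map (F := F) i hS).epi_f_iff

lemma mono_map_g_iff : Mono ((F i).map S.g) ↔ (F i).map S.f = 0 :=
  (exact_map (F := F) i hS).mono_g_iff

lemma isZero_obj_X₃_of_epi_of_mono (h : Epi ((F i).map S.f)) (h' : Mono ((F (i + 1)).map S.f)) :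
    IsZero ((F i).obj S.X₃) :=
  have := (epi_map_g_iff_mono_map_f F hS).2 h'
  .of_epi_eq_zero _ ((epi_map_f_iff F hS).1 h)

lemma isZero_obj_X₁_of_mono_of_epi
    (h : Mono ((F (i + 1)).map S.g)) (h' : Epi ((F i).map S.g)) :
    IsZero ((F (i + 1)).obj S.X₁) :=
  have := (epi_map_g_iff_mono_map_f F hS).1 h'
  .of_mono_eq_zero _ ((mono_map_g_iff F hS).1 h)

lemma isIso_map_f (h : ∀ i, IsZero ((F i).obj S.X₃)) (i : ℕ) : IsIso ((F i).map S.f) := by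
  have := hS.mono_f
  have : Epi ((F i).map S.f) := (epi_map_f_iff F hS).2 ((h i).eq_zero_of_tgt _)
  have : Mono ((F i).map S.f) := by
    cases i with
    | zero => infer_instance
    | succ i => exact (epi_map_g_iff_mono_map_f F hS).1 ((h i).epi _)
  exact isIso_of_mono_of_epi _

lemma isIso_map_g (h : ∀ i, IsZero ((F i).obj S.X₁)) (i : ℕ) : IsIso ((F i).map S.g) := by
  have : Mono ((F i).map S.g) := (mono_map_g_iff F hS).2 ((h i).eq_zero_of_src _)
  have : Epi ((F i).map S.g) := (epi_map_g_iff_mono_map_f F hS).2 ((h (i + 1)).mono _)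
  exact isIso_of_mono_of_epi _

end ShortExact

end IsDeltaFunctor

end DeltaFunctor

section TwoConnected

open Limits

variable {C D : Type*} [Category* C] [Category* D] {F : ℕ → C ⥤ D} {A B : C} {f : A ⟶ B}

/-- A morphism inducing isomorphisms in degrees `0` and `1` and a monomorphism in degree `2`:
the `F`-hypercohomology of its cone vanishes in the three lowest degrees. -/
structure IsTwoConnected (F : ℕ → C ⥤ D) {A B : C} (f : A ⟶ B) : Prop where
  isIso_zero : IsIso ((F 0).map f)
  isIso_one : IsIso ((F 1).map f)
  mono_two : Mono ((F 2).map f)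

lemma IsTwoConnected.epi {i : ℕ} (hf : IsTwoConnected F f) (hi : i ≤ 1) : Epi ((F i).map f) := by
  have := hf.isIso_zero
  have := hf.isIso_one
  interval_cases i <;> infer_instance

lemma IsTwoConnected.mono {i : ℕ} (hf : IsTwoConnected F f) (hi : i ≤ 2) : Mono ((F i).map f) := by
  have := hf.isIso_zero
  have := hf.isIso_one
  have := hf.mono_two
  interval_cases i <;> infer_instance

end TwoConnected

section PullbackAlongEndomorphism

open Limits

variable {C D : Type*} [Category* C] [Abelian C] [Category* D] [Abelian D]

lemma shortExact_factorThruImage {S : ShortComplex C} (hS : S.Exact) [Mono S.f] :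
    (ShortComplex.mk S.f (Abelian.factorThruImage S.g)
      (by simp [← cancel_mono (Abelian.image.ι S.g)])).ShortExact where
  exact := ShortComplex.exact_of_f_is_kernel _ <|
    isKernelOfComp _ S.g hS.fIsKernel _ (Abelian.image.fac S.g)

lemma shortExact_kernelι_factorThruImage {X Y : C} (f : X ⟶ Y) :
    (ShortComplex.mk (kernel.ι f) (Abelian.factorThruImage f)
      (by simp [← cancel_mono (Abelian.image.ι f)])).ShortExact :=
  shortExact_factorThruImage (ShortComplex.kernelSequence_exact f)

lemma shortExact_imageι_cokernelπ {X Y : C} (f : X ⟶ Y) :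
    (ShortComplex.mk (Abelian.image.ι f) (cokernel.π f) (by simp)).ShortExact where
  exact := ShortComplex.kernelSequence_exact (cokernel.π f)

lemma shortExact_lift_factorThruImage_desc {P A A' B : C} {p : P ⟶ A} {q : P ⟶ A'} {f : A ⟶ B}
    {ξ : A' ⟶ B} (hP : IsPullback p q f ξ) :
    (ShortComplex.mk (biprod.lift p q) (Abelian.factorThruImage (biprod.desc f (-ξ)))
      (by simp [← cancel_mono (Abelian.image.ι (biprod.desc f (-ξ))), hP.w])).ShortExact :=
  have : Mono hP.shortComplex'.f := hP.mono_shortComplex'_f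
  shortExact_factorThruImage hP.exact_shortComplex'

lemma map_fst_eq_zero (G : C ⥤ D) [G.Additive] {P A B : C} {p : P ⟶ A} {q : P ⟶ B} {f : A ⟶ B}
    {ξ : B ⟶ B} (hP : p ≫ f = q ≫ ξ) (hξ : G.map ξ = 0) (hf : Mono (G.map f)) : G.map p = 0 := by
  rw [← cancel_mono (G.map f), ← G.map_comp, hP, G.map_comp, hξ, comp_zero, zero_comp]

lemma map_lift_of_map_fst_eq_zero (G : C ⥤ D) [G.Additive] {P A B : C} {p : P ⟶ A} {q : P ⟶ B}
    (hp : G.map p = 0) : G.map (biprod.lift p q) = G.map q ≫ G.map biprod.inr := by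
  rw [biprod.lift_eq, G.map_add, G.map_comp, hp, zero_comp, zero_add, G.map_comp]

lemma map_of_map_inr_comp_eq_zero (G : C ⥤ D) [G.Additive] {A B I : C} {π : A ⊞ B ⟶ I}
    (h : G.map (biprod.inr ≫ π) = 0) : G.map π = G.map biprod.fst ≫ G.map (biprod.inl ≫ π) := by
  have : π = biprod.fst ≫ biprod.inl ≫ π + biprod.snd ≫ biprod.inr ≫ π := by
    ext <;> simp
  rw [← G.map_comp]
  nth_rw 1 [this]
  rw [G.map_add, G.map_comp biprod.snd, h, comp_zero, add_zero]

lemma epi_and_mono_of_exact_comp_inr_fst_comp {W X Y Z : C} (b : BinaryBicone X Y)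
    {q : W ⟶ Y} {v : X ⟶ Z}
    (h : (ShortComplex.mk (q ≫ b.inr) (b.fst ≫ v) (by simp)).Exact) : Epi q ∧ Mono v := by
  refine ⟨(epi_iff_surjective_up_to_refinements q).2 fun {A} y ↦ ?_,
    Preadditive.mono_of_cancel_zero _ fun {A} a ha ↦ ?_⟩
  · obtain ⟨A', π, hπ, w, hw⟩ := h.exact_up_to_refinements (y ≫ b.inr) (by simp)
    exact ⟨A', π, hπ, w, by simpa using hw =≫ b.snd⟩
  · obtain ⟨A', π, hπ, w, hw⟩ := h.exact_up_to_refinements (a ≫ b.inl) (by simpa using ha)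
    rw [← cancel_epi π]
    simpa using hw =≫ b.fst

namespace IsDeltaFunctor

variable (F : ℕ → C ⥤ D) [∀ i, (F i).Additive] [IsDeltaFunctor F] {A B : C} {f : A ⟶ B}

lemma isIso_map_of_isZero_kernel_of_isZero_cokernel (hK : ∀ i, IsZero ((F i).obj (kernel f)))
    (hN : ∀ i, IsZero ((F i).obj (cokernel f))) (i : ℕ) : IsIso ((F i).map f) := by
  have := isIso_map_g F (shortExact_kernelι_factorThruImage f) hK i
  have := isIso_map_f F (shortExact_imageι_cokernelπ f) hN i
  dsimp only at *
  rw [← Abelian.image.fac f, Functor.map_comp]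
  infer_instance

lemma isZero_obj_zero_kernel (h : Mono ((F 0).map f)) : IsZero ((F 0).obj (kernel f)) := by
  refine .of_mono_eq_zero ((F 0).map (kernel.ι f)) ?_
  rw [← cancel_mono ((F 0).map f), ← Functor.map_comp, kernel.condition, Functor.map_zero,
    zero_comp]

lemma isZero_obj_one_kernel (h₀ : Epi ((F 0).map f)) (h₁ : Mono ((F 1).map f)) :
    IsZero ((F 1).obj (kernel f)) := by
  have fac (i : ℕ) := ((F i).map_comp _ _).symm.trans (congrArg (F i).map (Abelian.image.fac f))
  have : Epi ((F 0).map (Abelian.image.ι f)) := epi_of_epi_fac (fac 0)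
  have := isIso_of_mono_of_epi ((F 0).map (Abelian.image.ι f))
  refine isZero_obj_X₁_of_mono_of_epi F (shortExact_kernelι_factorThruImage f)
    (mono_of_mono_fac (fac 1)) ?_
  have : (F 0).map (Abelian.factorThruImage f) = (F 0).map f ≫ inv ((F 0).map _) :=
    (IsIso.eq_comp_inv _).2 (fac 0)
  exact this ▸ epi_comp _ _

lemma isZero_obj_zero_cokernel (h₀ : Epi ((F 0).map f)) (h₁ : Mono ((F 1).map f))
    (hK : IsZero ((F 2).obj (kernel f))) : IsZero ((F 0).obj (cokernel f)) := by
  have fac (i : ℕ) := ((F i).map_comp _ _).symm.trans (congrArg (F i).map (Abelian.image.fac f))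
  have : Epi ((F 1).map (Abelian.factorThruImage f)) :=
    (epi_map_g_iff_mono_map_f F (shortExact_kernelι_factorThruImage f)).2 (hK.mono _)
  have : Mono ((F 1).map (Abelian.factorThruImage f)) := mono_of_mono_fac (fac 1)
  have := isIso_of_mono_of_epi ((F 1).map (Abelian.factorThruImage f))
  refine isZero_obj_X₃_of_epi_of_mono F (shortExact_imageι_cokernelπ f)
    (epi_of_epi_fac (fac 0)) ?_
  have : (F 1).map (Abelian.image.ι f) = inv ((F 1).map _) ≫ (F 1).map f :=
    (IsIso.eq_inv_comp _).2 (fac 1)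
  exact this ▸ mono_comp _ _

end IsDeltaFunctor

namespace IsTwoConnected

variable {F : ℕ → C ⥤ D} [∀ i, (F i).Additive] [IsDeltaFunctor F] {A B P : C} {f : A ⟶ B}
  {p : P ⟶ A} {q : P ⟶ B} {ξ : B ⟶ B} {g : A ⟶ P}

lemma epi_map_factorThruImage_zero (hf : IsTwoConnected F f) :
    Epi ((F 0).map (Abelian.factorThruImage (biprod.desc f (-ξ)))) := by
  have hv : (F 0).map (biprod.inl ≫ Abelian.factorThruImage (biprod.desc f (-ξ))) ≫
      (F 0).map (Abelian.image.ι _) = (F 0).map f := by simp [← Functor.map_comp]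
  have := hf.isIso_zero
  have := epi_of_epi_fac hv
  have := isIso_of_mono_of_epi ((F 0).map (Abelian.image.ι (biprod.desc f (-ξ))))
  have : IsIso ((F 0).map (biprod.inl ≫ Abelian.factorThruImage (biprod.desc f (-ξ)))) :=
    .of_isIso_fac_right hv
  rw [Functor.map_comp] at this
  exact epi_of_epi ((F 0).map biprod.inl) _

lemma of_isPullback (hf : IsTwoConnected F f) (hP : IsPullback p q f ξ)
    (hξ : ∀ i, (F i).map ξ = 0) (hgq : g ≫ q = f) : IsTwoConnected F g := by
  have hS := shortExact_lift_factorThruImage_desc hP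
  have fac (i : ℕ) : (F i).map g ≫ (F i).map q = (F i).map f := by rw [← Functor.map_comp, hgq]
  have isIso_q {i : ℕ} (hi : i ≤ 1) (h : Mono ((F i).map (biprod.lift p q))) :
      IsIso ((F i).map q) := by
    have hp := map_fst_eq_zero (F i) hP.w (hξ i) (hf.mono (by lia))
    rw [map_lift_of_map_fst_eq_zero (F i) hp] at h
    have := mono_of_mono ((F i).map q) ((F i).map (biprod.inr : B ⟶ A ⊞ B))
    have := hf.epi hi
    have := epi_of_epi_fac (fac i)
    exact isIso_of_mono_of_epi _
  have := hf.isIso_zero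
  have := hf.isIso_one
  have := hf.mono_two
  have := hS.mono_f
  have := isIso_q (i := 0) (by simp) inferInstance
  have := isIso_q (i := 1) le_rfl
    ((IsDeltaFunctor.epi_map_g_iff_mono_map_f F hS).1 hf.epi_map_factorThruImage_zero)
  exact ⟨.of_isIso_fac_right (fac 0), .of_isIso_fac_right (fac 1), mono_of_mono_fac (fac 2)⟩

section Converse

variable (hf : IsTwoConnected F f) (hP : IsPullback p q f ξ) (hξ : ∀ i, (F i).map ξ = 0)
  {ζ : A ⟶ A} (hζ : ∀ i, (F i).map ζ = 0) (hgq : g ≫ q = f) (hgp : g ≫ p = ζ)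
  (hg : ∀ i, IsIso ((F i).map g))
include hf hP hξ hζ hgq hgp hg

lemma isZero_obj_zero_cokernel_desc :
    IsZero ((F 0).obj (cokernel (biprod.desc f (-ξ)))) := by
  set π := Abelian.factorThruImage (biprod.desc f (-ξ))
  set j := Abelian.image.ι (biprod.desc f (-ξ))
  have hS := shortExact_lift_factorThruImage_desc hP
  have hvj (i : ℕ) : (F i).map (biprod.inl ≫ π) ≫ (F i).map j = (F i).map f := by
    simp [← Functor.map_comp, π, j]
  have := hf.isIso_one
  have hw : (F 1).map (biprod.inr ≫ π) = 0 := by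
    rw [← cancel_epi ((F 1).map f), ← Functor.map_comp]
    have hζf : ζ ≫ f = f ≫ ξ := by rw [← hgp, Category.assoc, hP.w, reassoc_of% hgq]
    have : f ≫ biprod.inr ≫ π = -(ζ ≫ biprod.inl ≫ π) := by
      rw [← cancel_mono j]
      simp [π, j, hζf]
    rw [this, Functor.map_neg, Functor.map_comp, hζ, zero_comp, neg_zero, comp_zero]
  have := hf.mono_two
  have := hg 2
  have : Mono ((F 2).map q) := by
    have : (F 2).map q = inv ((F 2).map g) ≫ (F 2).map f := by
      rw [IsIso.eq_inv_comp, ← Functor.map_comp, hgq]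
    rw [this]
    infer_instance
  have hlift : Mono ((F 2).map (biprod.lift p q)) := by
    rw [map_lift_of_map_fst_eq_zero (F 2) (map_fst_eq_zero (F 2) hP.w (hξ 2) hf.mono_two)]
    infer_instance
  have hπ₁ : Epi ((F 1).map π) := (IsDeltaFunctor.epi_map_g_iff_mono_map_f F hS).2 hlift
  rw [map_of_map_inr_comp_eq_zero (F 1) hw] at hπ₁
  have := epi_of_epi ((F 1).map (biprod.fst : A ⊞ B ⟶ A)) ((F 1).map (biprod.inl ≫ π))
  have := mono_of_mono_fac (hvj 1)
  have := isIso_of_mono_of_epi ((F 1).map (biprod.inl ≫ π))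
  have hj₁ : IsIso ((F 1).map j) := .of_isIso_fac_left (hvj 1)
  have := hf.isIso_zero
  exact IsDeltaFunctor.isZero_obj_X₃_of_epi_of_mono F (shortExact_imageι_cokernelπ _)
    (epi_of_epi_fac (hvj 0)) hj₁.mono_of_iso

lemma isIso_map_of_isPullback
    (hW : IsZero ((F 0).obj (cokernel (biprod.desc f (-ξ)))) →
      ∀ i, IsZero ((F i).obj (cokernel (biprod.desc f (-ξ))))) (i : ℕ) :
    IsIso ((F i).map f) := by
  set π := Abelian.factorThruImage (biprod.desc f (-ξ))
  set j := Abelian.image.ι (biprod.desc f (-ξ))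
  have hS := shortExact_lift_factorThruImage_desc hP
  have := IsDeltaFunctor.isIso_map_f F (shortExact_imageι_cokernelπ _)
    (hW (hf.isZero_obj_zero_cokernel_desc hP hξ hζ hgq hgp hg)) i
  have hw : (F i).map (biprod.inr ≫ π) = 0 := by
    rw [← cancel_mono ((F i).map j), ← Functor.map_comp]
    simp [π, j, hξ]
  have hp : (F i).map p = 0 := by
    rw [← cancel_epi ((F i).map g), ← Functor.map_comp, hgp, hζ, comp_zero]
  have hex : (ShortComplex.mk ((F i).map (biprod.lift p q)) ((F i).map π) _).Exact :=
    IsDeltaFunctor.exact_map i hS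
  simp only [map_lift_of_map_fst_eq_zero (F i) hp, map_of_map_inr_comp_eq_zero (F i) hw] at hex
  obtain ⟨_, _⟩ := epi_and_mono_of_exact_comp_inr_fst_comp
    ((F i).mapBinaryBicone (BinaryBiproduct.bicone A B)) (q := (F i).map q)
    (v := (F i).map (biprod.inl ≫ π)) hex
  have hvj : (F i).map (biprod.inl ≫ π) ≫ (F i).map j = (F i).map f := by
    simp [← Functor.map_comp, π, j]
  have hgq : (F i).map g ≫ (F i).map q = (F i).map f := by rw [← Functor.map_comp, hgq]
  have : Mono ((F i).map f) := by rw [← hvj]; infer_instance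
  have : Epi ((F i).map f) := by rw [← hgq]; infer_instance
  exact isIso_of_mono_of_epi _

end Converse

end IsTwoConnected

end PullbackAlongEndomorphism

/-! ### Serre classes of modules -/

section SerreQuotient

open Limits

lemma exists_exact_functor_isZero_obj_iff {C : Type u} [Category.{v} C] [Abelian C]
    (P : ObjectProperty C) [P.IsSerreClass] :
    ∃ (D : Type u) (_ : Category.{max u v} D) (_ : Abelian D) (L : C ⥤ D), L.Additive ∧
      PreservesFiniteLimits L ∧ PreservesFiniteColimits L ∧
      ∀ X, IsZero (L.obj X) ↔ P X :=
  ⟨P.isoModSerre.Localization, inferInstance,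
    ObjectProperty.SerreClassLocalization.abelian P.isoModSerre.Q P, P.isoModSerre.Q,
    inferInstance, ObjectProperty.SerreClassLocalization.preservesFiniteLimits _ P,
    ObjectProperty.SerreClassLocalization.preservesFiniteColimits _ P,
    ObjectProperty.SerreClassLocalization.isZero_obj_iff _ P⟩

instance isSerreClass_inf {C : Type*} [Category* C] [Abelian C] (P Q : ObjectProperty C)
    [P.IsSerreClass] [Q.IsSerreClass] : (P ⊓ Q).IsSerreClass where
  exists_zero := ⟨_, isZero_zero C, P.prop_zero, Q.prop_zero⟩
  prop_of_mono f _ h := ⟨P.prop_of_mono f h.1, Q.prop_of_mono f h.2⟩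
  prop_of_epi f _ h := ⟨P.prop_of_epi f h.1, Q.prop_of_epi f h.2⟩
  prop_X₂_of_shortExact hS h₁ h₃ :=
    ⟨P.prop_X₂_of_shortExact hS h₁.1 h₃.1, Q.prop_X₂_of_shortExact hS h₁.2 h₃.2⟩

end SerreQuotient

section ModuleSerre

variable {R : Type u} [CommRing R]

section API

variable (P : ObjectProperty (ModuleCat.{v} R)) {X Y Z : Type v} [AddCommGroup X] [Module R X]
  [AddCommGroup Y] [Module R Y] [AddCommGroup Z] [Module R Z]

lemma prop_of_injective [P.IsClosedUnderSubobjects] (f : X →ₗ[R] Y) (hf : Function.Injective f)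
    (h : P (.of R Y)) : P (.of R X) :=
  have : Mono (ModuleCat.ofHom f) := (ModuleCat.mono_iff_injective _).2 hf
  P.prop_of_mono (ModuleCat.ofHom f) h

lemma prop_of_surjective [P.IsClosedUnderQuotients] (f : X →ₗ[R] Y) (hf : Function.Surjective f)
    (h : P (.of R X)) : P (.of R Y) :=
  have : Epi (ModuleCat.ofHom f) := (ModuleCat.epi_iff_surjective _).2 hf
  P.prop_of_epi (ModuleCat.ofHom f) h

lemma prop_of_exact [P.IsSerreClass] {f : X →ₗ[R] Y} {g : Y →ₗ[R] Z} (hfg : Function.Exact f g)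
    (hX : P (.of R X)) (hZ : P (.of R Z)) : P (.of R Y) :=
  P.prop_X₂_of_exact (S := ShortComplex.mk (ModuleCat.ofHom f) (ModuleCat.ofHom g)
    (by ext x; exact hfg.apply_apply_eq_zero x))
    ((ShortComplex.ShortExact.moduleCat_exact_iff_function_exact _).2 hfg) hX hZ

lemma prop_of_subsingleton [P.IsSerreClass] [Subsingleton X] : P (.of R X) :=
  P.prop_of_isZero (ModuleCat.isZero_of_subsingleton _)

lemma prop_pi [P.IsSerreClass] (hX : P (.of R X)) (n : ℕ) : P (.of R (Fin n → X)) := by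
  induction n with
  | zero => exact prop_of_subsingleton P
  | succ n ih =>
    exact prop_of_injective P (Fin.consLinearEquiv R fun _ : Fin (n + 1) ↦ X).symm.toLinearMap
      (LinearEquiv.injective _) (prop_of_exact P .inl_snd hX ih)

lemma isSerreClass_of_linearMap {P : ObjectProperty (ModuleCat.{v} R)}
    (h₀ : P (.of R PUnit))
    (sub : ∀ {X Y : ModuleCat.{v} R} (f : X →ₗ[R] Y), Function.Injective f → P Y → P X)
    (quot : ∀ {X Y : ModuleCat.{v} R} (f : X →ₗ[R] Y), Function.Surjective f → P X → P Y)
    (ext : ∀ {X Y Z : ModuleCat.{v} R} (f : X →ₗ[R] Y) (g : Y →ₗ[R] Z), Function.Injective f →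
      Function.Exact f g → Function.Surjective g → P X → P Z → P Y) : P.IsSerreClass where
  exists_zero := ⟨_, ModuleCat.isZero_of_subsingleton _, h₀⟩
  prop_of_mono f hf := sub f.hom ((ModuleCat.mono_iff_injective f).1 hf)
  prop_of_epi f hf := quot f.hom ((ModuleCat.epi_iff_surjective f).1 hf)
  prop_X₂_of_shortExact {S} hS := ext S.f.hom S.g.hom hS.moduleCat_injective_f
    ((ShortComplex.ShortExact.moduleCat_exact_iff_function_exact S).1 hS.exact)
    hS.moduleCat_surjective_g

end API

/-- The modules whose support is contained in `Z`. -/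
def supportedIn (Z : Set (PrimeSpectrum R)) : ObjectProperty (ModuleCat.{v} R) :=
  fun X ↦ Module.support R X ⊆ Z

instance (Z : Set (PrimeSpectrum R)) : (supportedIn.{u, v} Z).IsSerreClass :=
  isSerreClass_of_linearMap (by simp [supportedIn, Module.support_eq_empty])
    (fun f hf h ↦ (Module.support_subset_of_injective f hf).trans h)
    (fun f hf h ↦ (Module.support_subset_of_surjective f hf).trans h)
    fun f g hf hfg hg hX hZ ↦
      (Module.support_of_exact hfg hf hg).trans_subset (Set.union_subset hX hZ)

/-- The modules annihilated, elementwise, by powers of the elements of `𝔟`: for `𝔟` finitely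
generated these are the modules annihilated by a power of `𝔟`. -/
def radicalAnnihilated (𝔟 : Ideal R) : ObjectProperty (ModuleCat.{v} R) :=
  fun X ↦ 𝔟 ≤ (Module.annihilator R X).radical

instance (𝔟 : Ideal R) : (radicalAnnihilated.{u, v} 𝔟).IsSerreClass :=
  isSerreClass_of_linearMap
    (by
      rw [radicalAnnihilated, Module.annihilator_eq_top_iff.2 inferInstance]
      exact le_top.trans Ideal.le_radical)
    (fun f hf h ↦ h.trans (Ideal.radical_mono (f.annihilator_le_of_injective hf)))
    (fun f hf h ↦ h.trans (Ideal.radical_mono (f.annihilator_le_of_surjective hf)))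
    fun f g _ hfg _ hX hZ r hr ↦ by
      obtain ⟨m, hm⟩ := hX hr
      obtain ⟨n, hn⟩ := hZ hr
      rw [Module.mem_annihilator] at hm hn
      refine ⟨m + n, Module.mem_annihilator.2 fun y ↦ ?_⟩
      obtain ⟨x, hx⟩ := (hfg (r ^ n • y)).1 (by rw [map_smul, hn])
      rw [pow_add, mul_smul, ← hx, ← map_smul, hm, map_zero]

section FiniteBy

open Submodule

lemma exists_fg_map_eq {X Y : Type*} [AddCommGroup X] [Module R X] [AddCommGroup Y] [Module R Y]
    {g : X →ₗ[R] Y} (hg : Function.Surjective g) {L : Submodule R Y} (hL : L.FG) :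
    ∃ N : Submodule R X, N.FG ∧ N.map g = L := by
  obtain ⟨s, hs, rfl⟩ := (Submodule.fg_def).1 hL
  refine ⟨span R (Function.surjInv hg '' s), fg_span (hs.image _), ?_⟩
  rw [map_span, Set.image_image]
  simp [Function.surjInv_eq hg]

/-- The extensions of modules in `P` by finitely generated modules. -/
def finiteBy (P : ObjectProperty (ModuleCat.{v} R)) : ObjectProperty (ModuleCat.{v} R) :=
  fun X ↦ ∃ L : Submodule R X, L.FG ∧ P (.of R (X ⧸ L))

variable {P : ObjectProperty (ModuleCat.{v} R)} [P.IsSerreClass]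

lemma finiteBy_of_finite (X : ModuleCat.{v} R) [h : Module.Finite R X] : finiteBy P X :=
  ⟨⊤, h.fg_top, prop_of_subsingleton P⟩

/-- The modules which are extensions of a module of dimension `< k` by a finitely generated module
(`FD_{<k}` in the literature). The dimension of `R/p` is encoded as the coheight of `p`. -/
def finiteByDimLT (R : Type u) [CommRing R] (k : ℕ) :
    ObjectProperty (ModuleCat.{v} R) :=
  finiteBy (supportedIn {p | Order.coheight p < k})

lemma finiteByDimLT_mono {k l : ℕ} (h : k ≤ l) {X : ModuleCat.{v} R}
    (hX : finiteByDimLT R k X) : finiteByDimLT R l X := by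
  obtain ⟨L, hL, hXL⟩ := hX
  have : (k : ℕ∞) ≤ l := Nat.cast_le.2 h
  exact ⟨L, hL, hXL.trans fun p hp ↦ lt_of_lt_of_le (b := (k : ℕ∞)) hp this⟩

lemma finiteByDimLT_zero_iff {X : ModuleCat.{v} R} :
    finiteByDimLT R 0 X ↔ Module.Finite R X := by
  refine ⟨fun ⟨L, hL, h⟩ ↦ ?_, fun _ ↦ finiteBy_of_finite X⟩
  have : Module.support R (X ⧸ L) = ∅ := by simpa [supportedIn] using h
  rw [Module.support_eq_empty_iff, Submodule.Quotient.subsingleton_iff] at this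
  exact ⟨this ▸ hL⟩

lemma coheight_le_moduleDim {X : Type u}
    [AddCommGroup X] [Module R X] {p : PrimeSpectrum R}
    (hp : p ∈ Module.support R X) : Order.coheight p ≤ moduleDim R X := by
  rw [Order.coheight_eq_krullDim_Ici]
  exact Order.krullDim_le_of_strictMono (Set.inclusion fun q hq ↦ Module.mem_support_mono hq hp)
    fun _ _ h ↦ h

lemma MemFD.finiteByDimLT {n : ℕ} {X : ModuleCat.{u} R} (h : MemFD R n X) :
    finiteByDimLT R (n + 1) X := by
  obtain ⟨L, hL, hdim⟩ := h
  refine ⟨L, hL, fun p hp ↦ ?_⟩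
  have : Order.coheight p ≤ n := by exact_mod_cast (coheight_le_moduleDim hp).trans hdim
  exact this.trans_lt (by exact_mod_cast n.lt_succ_self)

lemma finiteBy_of_exact {X Y Z : Type v} [AddCommGroup X] [Module R X] [AddCommGroup Y]
    [Module R Y] [AddCommGroup Z] [Module R Z] {f : X →ₗ[R] Y} {g : Y →ₗ[R] Z}
    (hfg : Function.Exact f g) (hg : Function.Surjective g) (hX : finiteBy P (.of R X))
    (hZ : finiteBy P (.of R Z)) : finiteBy P (.of R Y) := by
  obtain ⟨L, hL, hXL⟩ := hX
  obtain ⟨L', hL', hZL'⟩ := hZ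
  obtain ⟨N, hN, rfl⟩ := exists_fg_map_eq hg hL'
  refine ⟨L.map f ⊔ N, (hL.map f).sup hN, prop_of_exact P
    (f := mapQ L _ f (map_le_iff_le_comap.1 le_sup_left))
    (g := mapQ _ (N.map g) g (sup_le ?_ (le_comap_map g N))) ?_ hXL hZL'⟩
  · rw [comap_map_eq, hfg.linearMap_ker_eq]
    exact le_sup_of_le_right LinearMap.map_le_range
  · rw [LinearMap.exact_iff, ker_mapQ, range_mapQ, comap_map_eq, hfg.linearMap_ker_eq,
      Submodule.map_sup,
      (LinearMap.le_ker_iff_map (f := mkQ _)).1 (by rw [ker_mkQ]; exact le_sup_right), bot_sup_eq]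

variable [IsNoetherianRing R]

instance : (finiteBy P).IsSerreClass :=
  isSerreClass_of_linearMap ⟨⊥, fg_bot, prop_of_subsingleton P⟩
    (fun {X Y} f hf ⟨L, hL, hP⟩ ↦
      have : IsNoetherian R L := isNoetherian_of_fg_of_noetherian L hL
      ⟨L.comap f, fg_of_fg_map_injective f hf (.of_le hL (map_comap_le f L)),
      prop_of_injective P (mapQ (L.comap f) L f le_rfl)
        (by rw [← LinearMap.ker_eq_bot, ker_mapQ, mkQ_map_self]) hP⟩)
    (fun {X Y} f hf ⟨L, hL, hP⟩ ↦ ⟨L.map f, hL.map f,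
      prop_of_surjective P (mapQ L (L.map f) f (le_comap_map f L))
        (by rw [← LinearMap.range_eq_top, range_mapQ, LinearMap.range_eq_top.2 hf,
          Submodule.map_top, range_mkQ]) hP⟩)
    fun f g _ hfg hg ↦ finiteBy_of_exact hfg hg

instance (k : ℕ) : (finiteByDimLT.{u, v} R k).IsSerreClass :=
  inferInstanceAs (finiteBy _).IsSerreClass

end FiniteBy

end ModuleSerre

/-! ### The functors `Ext^i(R/𝔞, -)` -/

section ExtComparison

open Abelian

variable {R : Type*} [CommRing R] {C : Type u} [Category.{v} C] [Abelian C] [Linear R C]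
  [HasExt.{w} C] {X : C} (P : ProjectiveResolution X) (Y : C) (n : ℕ)

open CochainComplex.HomComplex in
lemma eq_zero_of_extMk_zero_eq_zero {Y : C} (f : P.complex.X 0 ⟶ Y)
    (hf : P.complex.d 1 0 ≫ f = 0) (h : P.extMk f 1 rfl hf = 0) : f = 0 := by
  rw [← P.extEquivCohomologyClass.apply_eq_iff_eq,
    ProjectiveResolution.extEquivCohomologyClass_extMk,
    ProjectiveResolution.extEquivCohomologyClass_zero, CohomologyClass.mk_eq_zero_iff,
    Cocycle.toSingleMk_mem_coboundaries_iff _ _ _ _ _ (1 : ℤ) (by simp)] at h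
  obtain ⟨g, hg⟩ := h
  have hd : P.cochainComplex.d (-(0 : ℕ)) 1 = 0 :=
    (P.cochainComplex.isZero_of_isStrictlyLE 0 1 (by simp)).eq_of_tgt _ _
  rw [← cancel_epi (P.cochainComplexXIso (-(0 : ℕ)) 0 rfl).hom, ← hg, hd, Limits.zero_comp,
    Limits.comp_zero]

/-- The class in `Ext` of a cocycle of the complex `Hom(P, Y)` computing it, as a linear map. -/
noncomputable def extMkLinearMap :
    LinearMap.ker ((P.complex.linearYonedaObj R Y).d n (n + 1)).hom →ₗ[R] Abelian.Ext X Y n where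
  toFun f := P.extMk (f.1 : P.complex.X n ⟶ Y) (n + 1) rfl f.2
  map_add' f g := (P.add_extMk ..).symm
  map_smul' r f := by
    rw [RingHom.id_apply, Ext.smul_eq_comp_mk₀]
    refine .trans ?_ (P.extMk_comp_mk₀ (f.1 : P.complex.X n ⟶ Y) (n + 1) rfl f.2 _).symm
    congr 1
    exact ((Linear.comp_smul ..).trans (congrArg (r • ·) (Category.comp_id _))).symm

lemma extMkLinearMap_surjective : Function.Surjective (extMkLinearMap (R := R) P Y n) := fun α ↦ by
  obtain ⟨f, hf, h⟩ := P.extMk_surjective α (n + 1) rfl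
  exact ⟨⟨f, hf⟩, h⟩

lemma extMkLinearMap_eq_zero_iff
    (f : LinearMap.ker ((P.complex.linearYonedaObj R Y).d n (n + 1)).hom) :
    extMkLinearMap P Y n f = 0 ↔
      ∃ g, ((P.complex.linearYonedaObj R Y).d ((ComplexShape.up ℕ).prev n) n).hom g = f.1 := by
  cases n with
  | zero =>
    have hd : (P.complex.linearYonedaObj R Y).d ((ComplexShape.up ℕ).prev 0) 0 = 0 :=
      (P.complex.linearYonedaObj R Y).shape _ _ (by simp)
    simp only [hd]
    refine ⟨fun h ↦ ⟨0, (eq_zero_of_extMk_zero_eq_zero P _ f.2 h).symm⟩, fun ⟨g, hg⟩ ↦ ?_⟩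
    rw [show f = 0 from Subtype.ext hg.symm, map_zero]
  | succ p =>
    rw [CochainComplex.prev_nat_succ]
    exact P.extMk_eq_zero_iff f.1 (p + 1 + 1) rfl f.2 p rfl

theorem nonempty_ext_linearEquiv [EnoughProjectives C] :
    Nonempty (((_root_.Ext R C n).obj (Opposite.op X)).obj Y ≃ₗ[R] Abelian.Ext X Y n) := by
  let P := projectiveResolution X
  let K := P.complex.linearYonedaObj R Y
  let S := K.sc' ((ComplexShape.up ℕ).prev n) n (n + 1)
  let φ : LinearMap.ker S.g.hom →ₗ[R] Abelian.Ext X Y n := extMkLinearMap P Y n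
  have hφ : LinearMap.range S.moduleCatToCycles = LinearMap.ker φ := by
    ext f
    exact .trans (exists_congr fun _ ↦ Subtype.ext_iff) (extMkLinearMap_eq_zero_iff P Y n f).symm
  exact ⟨(P.isoExt n Y ≪≫ K.homologyIsoSc' _ n (n + 1) rfl (by simp) ≪≫
    S.moduleCatHomologyIso).toLinearEquiv.trans ((Submodule.quotEquivOfEq _ _ hφ).trans
      (φ.quotKerEquivOfSurjective (extMkLinearMap_surjective P Y n)))⟩

end ExtComparison

section ExtFunctor

open Abelian

variable (R : Type*) [CommRing R] {C : Type u} [Category.{v} C] [Abelian C] [Linear R C]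
  [HasExt.{w} C] (N : C) (i : ℕ)

/-- The covariant functor `Ext^i(N, -)` with values in `R`-modules. -/
@[simps]
noncomputable def extLinearFunctor : C ⥤ ModuleCat.{w} R where
  obj X := .of R (Ext N X i)
  map f := ModuleCat.ofHom ((Ext.mk₀ f).postcompOfLinear R N (add_zero i))
  map_id X := by
    ext α
    exact α.comp_mk₀_id
  map_comp f g := by
    ext (α : Ext N _ i)
    exact (congrArg (α.comp · (add_zero i)) (Ext.mk₀_comp_mk₀ f g).symm).trans
      (α.comp_assoc_of_third_deg_zero _ _ _).symm

instance : (extLinearFunctor R N i).Additive where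
  map_add {X Y f g} := by
    ext α
    exact (congrArg (α.comp · (add_zero i)) (Ext.mk₀_add f g)).trans (Ext.comp_add ..)

instance : IsDeltaFunctor (extLinearFunctor R N) where
  mono_map_zero f _ :=
    (ModuleCat.mono_iff_injective _).2 (Ext.postcomp_mk₀_injective_of_mono N f)
  exact_map i S hS := (ShortComplex.moduleCat_exact_iff _).2 fun α hα ↦
    Ext.covariant_sequence_exact₂ N hS α hα
  exists_connecting i S hS := by
    refine ⟨ModuleCat.ofHom (hS.extClass.postcompOfLinear R N rfl), ?_, ?_,
      (ShortComplex.moduleCat_exact_iff _).2 fun α hα ↦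
        Ext.covariant_sequence_exact₃ N hS α rfl hα,
      (ShortComplex.moduleCat_exact_iff _).2 fun α hα ↦
        Ext.covariant_sequence_exact₁ N hS α hα rfl⟩
    · ext (α : Ext N _ i)
      exact (α.comp_assoc_of_second_deg_zero _ _ rfl).trans
        ((congrArg (α.comp · rfl) hS.comp_extClass).trans (α.comp_zero ..))
    · ext (α : Ext N _ i)
      exact (α.comp_assoc_of_third_deg_zero _ _ _).trans
        ((congrArg (α.comp · rfl) hS.extClass_comp).trans (α.comp_zero ..))

lemma extLinearFunctor_map_smul_id_eq_zero {r : R} (hr : r • 𝟙 N = 0) (X : C) :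
    (extLinearFunctor R N i).map (r • 𝟙 X) = 0 := by
  ext (α : Ext N X i)
  have h : α.comp (Ext.mk₀ (r • 𝟙 X)) (add_zero i) =
      (Ext.mk₀ (r • 𝟙 N)).comp α (zero_add i) := by
    simp only [Ext.mk₀_smul, Ext.comp_smul, Ext.smul_comp, Ext.comp_mk₀_id, Ext.mk₀_id_comp]
  exact h.trans (by rw [hr, Ext.mk₀_zero, Ext.zero_comp]; rfl)

end ExtFunctor

section ModuleExt

open Abelian

variable {R : Type u} [CommRing R] (P : ObjectProperty (ModuleCat.{u} R)) [P.IsSerreClass]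
  {X : ModuleCat.{u} R}

lemma prop_extLinearFunctor_obj [IsNoetherianRing R] (hX : P X) (N : ModuleCat.{u} R)
    [Module.Finite R N] (i : ℕ) : P ((extLinearFunctor R N i).obj X) := by
  induction i generalizing N with
  | zero =>
    obtain ⟨n, f, hf⟩ := Module.Finite.exists_fin' R N
    let evalGens : (N →ₗ[R] X) →ₗ[R] (Fin n → X) :=
      LinearMap.pi fun j ↦ LinearMap.applyₗ (f (Pi.single j 1))
    have evalGens_injective : Function.Injective evalGens := fun g g' h ↦
      (LinearMap.cancel_right hf).1 <| by
        ext j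
        simpa [evalGens] using congrFun h j
    let e : Ext N X 0 ≃ₗ[R] (N →ₗ[R] X) := Ext.linearEquiv₀.trans ModuleCat.homLinearEquiv
    exact prop_of_injective P (evalGens ∘ₗ e.toLinearMap) (evalGens_injective.comp e.injective)
      (prop_pi P hX n)
  | succ n ih =>
    obtain ⟨N', _, _, _, _, f, hf⟩ := Module.exists_finite_presentation R N
    have hS := LinearMap.shortExact_shortComplexKer hf
    exact prop_of_surjective P (hS.extClass.precompOfLinear R X (add_comm 1 n))
      (precomp_extClass_surjective_of_projective_X₂ X hS n) (ih (.of R (LinearMap.ker f)))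

/-- The functor `Ext^i_R(R/𝔞, -)`. -/
noncomputable abbrev extIdealFunctor (𝔞 : Ideal R) (i : ℕ) : ModuleCat.{u} R ⥤ ModuleCat.{u} R :=
  extLinearFunctor R (ModuleCat.of R (R ⧸ 𝔞)) i

lemma smul_quotient_mk_one_of_mem {𝔞 : Ideal R} {r : R} (hr : r ∈ 𝔞) : r • (1 : R ⧸ 𝔞) = 0 := by
  simpa [Algebra.smul_def] using Ideal.Quotient.eq_zero_iff_mem.2 hr

lemma extIdealFunctor_map_smul_id {𝔞 : Ideal R} {r : R} (hr : r ∈ 𝔞) (i : ℕ)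
    (X : ModuleCat.{u} R) : (extIdealFunctor 𝔞 i).map (r • 𝟙 X) = 0 :=
  extLinearFunctor_map_smul_id_eq_zero R _ i (by ext; exact smul_quotient_mk_one_of_mem hr) X

lemma prop_torsionBySet {𝔞 : Ideal R} (h : P ((extIdealFunctor 𝔞 0).obj X)) :
    P (.of R (Submodule.torsionBySet R X 𝔞)) := by
  let evalOne : (R ⧸ 𝔞 →ₗ[R] X) →ₗ[R] Submodule.torsionBySet R X 𝔞 :=
    (LinearMap.applyₗ 1).codRestrict _ fun φ ↦ (Submodule.mem_torsionBySet_iff _ _).2 fun x ↦ by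
      rw [LinearMap.applyₗ_apply_apply, ← map_smul,
        smul_quotient_mk_one_of_mem x.2, map_zero]
  have evalOne_surjective : Function.Surjective evalOne := fun m ↦
    ⟨𝔞.liftQ (LinearMap.toSpanSingleton R X m.1) fun x hx ↦
      (Submodule.mem_torsionBySet_iff _ _).1 m.2 ⟨x, hx⟩, Subtype.ext (one_smul R m.1)⟩
  let e : Ext (ModuleCat.of R (R ⧸ 𝔞)) X 0 ≃ₗ[R] (R ⧸ 𝔞 →ₗ[R] X) :=
    Ext.linearEquiv₀.trans ModuleCat.homLinearEquiv
  exact prop_of_surjective P (evalOne ∘ₗ e.toLinearMap)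
    (evalOne_surjective.comp e.surjective) h

end ModuleExt

/-! ### General elements of an ideal -/

section Generic

variable {R : Type*} [CommRing R] {𝔞 : Ideal R} {p q : R → Prop}

/-- The property `p` holds for general elements of `𝔞`: for all those outside finitely many primes
not containing `𝔞`. -/
def HoldsGenerically (𝔞 : Ideal R) (p : R → Prop) : Prop :=
  ∃ Q : Set (PrimeSpectrum R), Q.Finite ∧ (∀ q ∈ Q, ¬ 𝔞 ≤ q.asIdeal) ∧
    ∀ x ∈ 𝔞, (∀ q ∈ Q, x ∉ q.asIdeal) → p x

namespace HoldsGenerically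

lemma imp (hp : HoldsGenerically 𝔞 p) (h : ∀ x, p x → q x) : HoldsGenerically 𝔞 q :=
  let ⟨Q, hQ, hQ𝔞, H⟩ := hp
  ⟨Q, hQ, hQ𝔞, fun x hx hxQ ↦ h x (H x hx hxQ)⟩

lemma and (hp : HoldsGenerically 𝔞 p) (hq : HoldsGenerically 𝔞 q) :
    HoldsGenerically 𝔞 fun x ↦ p x ∧ q x := by
  obtain ⟨Q, hQ, hQ𝔞, H⟩ := hp
  obtain ⟨Q', hQ', hQ𝔞', H'⟩ := hq
  exact ⟨Q ∪ Q', hQ.union hQ', fun r hr ↦ hr.elim (hQ𝔞 r) (hQ𝔞' r), fun x hx hxQ ↦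
    ⟨H x hx fun r hr ↦ hxQ r (.inl hr), H' x hx fun r hr ↦ hxQ r (.inr hr)⟩⟩

lemma true : HoldsGenerically 𝔞 fun _ ↦ True :=
  ⟨∅, Set.finite_empty, by simp, by simp⟩

lemma forall_mem {ι : Type*} (s : Finset ι) {p : ι → R → Prop}
    (hp : ∀ i ∈ s, HoldsGenerically 𝔞 (p i)) : HoldsGenerically 𝔞 fun x ↦ ∀ i ∈ s, p i x := by
  classical
  induction s using Finset.induction_on with
  | empty => simpa using HoldsGenerically.true
  | insert i s _ ih =>
    simp only [Finset.forall_mem_insert] at hp ⊢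
    exact hp.1.and (ih hp.2)

lemma of_map {A : Type*} [CommRing A] {f : R →+* A} {p : A → Prop}
    (h : HoldsGenerically (𝔞.map f) p) : HoldsGenerically 𝔞 fun x ↦ p (f x) := by
  obtain ⟨Q, hQ, hQ𝔞, H⟩ := h
  refine ⟨PrimeSpectrum.comap f '' Q, hQ.image _, ?_, fun x hx hxQ ↦ H _
    (Ideal.mem_map_of_mem f hx) fun q hq ↦ hxQ _ (Set.mem_image_of_mem _ hq)⟩
  rintro _ ⟨q, hq, rfl⟩ h
  exact hQ𝔞 q hq (Ideal.map_le_iff_le_comap.2 h)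

lemma exists_mem_notMem (hp : HoldsGenerically 𝔞 p) {𝔟 : Ideal R} (h : ¬ 𝔞 ≤ 𝔟) :
    ∃ x ∈ 𝔞, x ∉ 𝔟 ∧ p x := by
  obtain ⟨Q, hQ, hQ𝔞, H⟩ := hp
  lift Q to Finset (PrimeSpectrum R) using hQ
  let J (r : Option (PrimeSpectrum R)) : Ideal R := r.elim 𝔟 PrimeSpectrum.asIdeal
  have : ¬ (𝔞 : Set R) ⊆ ⋃ r ∈ (Q.insertNone : Set (Option (PrimeSpectrum R))), J r := by
    rw [Ideal.subset_union_prime none none fun r _ hr _ ↦ ?_]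
    · simpa [J, h, Option.forall] using hQ𝔞
    · obtain ⟨r, rfl⟩ := Option.ne_none_iff_exists'.1 hr
      exact r.2
  obtain ⟨x, hx, hx'⟩ := Set.not_subset.1 this
  simp only [Set.mem_iUnion, not_exists] at hx'
  exact ⟨x, hx, hx' none Finset.none_mem_insertNone,
    H x hx fun r hr ↦ hx' (some r) (Finset.some_mem_insertNone.2 hr)⟩

end HoldsGenerically

end Generic

section Torsion

open Submodule

variable {R : Type u} [CommRing R] (P : ObjectProperty (ModuleCat.{v} R)) [P.IsSerreClass]
  {I : Ideal R} {Y : Type v} [AddCommGroup Y] [Module R Y]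

lemma prop_torsionBySet_pow (hI : I.FG) (h : P (.of R (torsionBySet R Y (I : Set R)))) (n : ℕ) :
    P (.of R (torsionBySet R Y (I ^ n : Ideal R))) := by
  induction n with
  | zero =>
    have : Subsingleton (torsionBySet R Y (I ^ 0 : Ideal R)) := by
      rw [pow_zero, Ideal.one_eq_top, Submodule.top_coe, torsionBySet_univ]
      infer_instance
    exact prop_of_subsingleton P
  | succ n ih =>
    obtain ⟨k, a, rfl⟩ := Submodule.fg_iff_exists_fin_generating_family.1 hI
    let φ : torsionBySet R Y (span R (Set.range a) ^ (n + 1) : Ideal R) →ₗ[R]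
        (Fin k → torsionBySet R Y (span R (Set.range a) ^ n : Ideal R)) :=
      LinearMap.pi fun j ↦ (DistribSMul.toLinearMap R Y (a j)).restrict fun y hy ↦
        (mem_torsionBySet_iff _ _).2 fun r ↦ by
          simpa [mul_smul] using (mem_torsionBySet_iff _ _).1 hy
            ⟨r * a j, pow_succ (span R (Set.range a)) n ▸
              Ideal.mul_mem_mul r.2 (subset_span ⟨j, rfl⟩)⟩
    have hφ (y : LinearMap.ker φ) : (y : Y) ∈ torsionBySet R Y (span R (Set.range a) : Set R) := by
      rw [← torsionBySet_eq_torsionBySet_span, mem_torsionBySet_iff]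
      rintro ⟨_, j, rfl⟩
      exact congrArg Subtype.val (congrFun y.2 j)
    exact prop_of_exact P (LinearMap.exact_subtype_ker_map φ)
      (prop_of_injective P (LinearMap.codRestrict _ (Submodule.subtype _ ∘ₗ Submodule.subtype _) hφ)
        (fun y z h ↦ Subtype.ext (Subtype.ext congr(($h : Y)))) h) (prop_pi P ih k)

lemma prop_of_radicalAnnihilated (hI : I.FG) (hY : radicalAnnihilated I (.of R Y))
    (h : P (.of R (torsionBySet R Y (I : Set R)))) : P (.of R Y) := by
  obtain ⟨n, hn⟩ := Ideal.exists_pow_le_of_le_radical_of_fg hY hI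
  exact prop_of_injective P (LinearMap.id.codRestrict _ fun y ↦ (mem_torsionBySet_iff _ _).2
    fun r ↦ Module.mem_annihilator.1 (hn r.2) y) (fun _ _ h ↦ congr(($h : Y)))
    (prop_torsionBySet_pow P hI h n)

end Torsion

section Artinian

open Submodule

variable {A Y : Type*} [CommRing A] [AddCommGroup Y] [Module A Y]

lemma exists_forall_le_eq_of_antitone_of_le {K : Submodule A Y} [IsArtinian A K]
    {h : ℕ → Submodule A Y} (hh : Antitone h) (hK : ∀ n, h n ≤ K) :
    ∃ n, ∀ m, n ≤ m → h m = h n := by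
  obtain ⟨n, hn⟩ := IsArtinian.monotone_stabilizes (R := A) (M := K)
    ⟨fun n ↦ OrderDual.toDual ((h n).comap K.subtype), fun m n hmn ↦ comap_mono (hh hmn)⟩
  refine ⟨n, fun m hm ↦ ?_⟩
  rw [← inf_eq_right.2 (hK m), ← inf_eq_right.2 (hK n), ← map_comap_subtype, ← map_comap_subtype]
  exact congrArg (map K.subtype) (hn m hm).symm

/-- The submodule `x ^ j • (B ∩ (0 : x ^ (j + 1)))` of `(0 : x)`. These submodules play the role of
the leading coefficient ideals in Hilbert's basis theorem. -/
def torsionLayer (x : A) (B : Submodule A Y) (j : ℕ) : Submodule A Y :=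
  (B ⊓ torsionBy A Y (x ^ (j + 1))).map (DistribSMul.toLinearMap A Y (x ^ j))

lemma mem_torsionLayer {x : A} {B : Submodule A Y} {j : ℕ} {y : Y} :
    y ∈ torsionLayer x B j ↔ ∃ b ∈ B, x ^ (j + 1) • b = 0 ∧ x ^ j • b = y := by
  simp [torsionLayer, and_assoc]

lemma torsionLayer_le (x : A) (B : Submodule A Y) (j : ℕ) :
    torsionLayer x B j ≤ torsionBy A Y x := by
  intro y hy
  obtain ⟨b, -, hb, rfl⟩ := mem_torsionLayer.1 hy
  rwa [mem_torsionBy_iff, ← mul_smul, ← pow_succ']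

lemma torsionLayer_mono {x : A} {B C : Submodule A Y} (h : B ≤ C) {i j : ℕ} (hij : i ≤ j) :
    torsionLayer x B j ≤ torsionLayer x C i := by
  intro y hy
  obtain ⟨b, hb, hb', rfl⟩ := mem_torsionLayer.1 hy
  obtain ⟨k, rfl⟩ := Nat.exists_eq_add_of_le hij
  refine mem_torsionLayer.2 ⟨x ^ k • b, C.smul_mem _ (h hb), ?_, ?_⟩ <;> rw [← mul_smul, ← pow_add]
  rwa [add_right_comm]

lemma le_of_torsionLayer_le {x : A} (hx : ∀ y : Y, ∃ n : ℕ, x ^ n • y = 0) {B C : Submodule A Y}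
    (hCB : C ≤ B) (h : ∀ j, torsionLayer x B j ≤ torsionLayer x C j) : B ≤ C := by
  suffices key : ∀ n : ℕ, ∀ b ∈ B, x ^ n • b = 0 → b ∈ C from fun b hb ↦
    let ⟨n, hn⟩ := hx b
    key n b hb hn
  intro n
  induction n with
  | zero =>
    intro b _ hb
    rw [pow_zero, one_smul] at hb
    exact hb ▸ C.zero_mem
  | succ n ih =>
    intro b hb hb'
    obtain ⟨c, hc, -, hc'⟩ := mem_torsionLayer.1 (h n (mem_torsionLayer.2 ⟨b, hb, hb', rfl⟩))
    have : b - c ∈ C := ih _ (B.sub_mem hb (hCB hc)) (by rw [smul_sub, hc', sub_self])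
    exact (C.sub_mem_iff_left hc).1 this

lemma isArtinian_of_torsionBy {x : A} (hx : ∀ y : Y, ∃ n : ℕ, x ^ n • y = 0)
    [IsArtinian A (torsionBy A Y x)] : IsArtinian A Y := by
  refine monotone_stabilizes_iff_artinian.1 fun f ↦ ?_
  let B (n : ℕ) : Submodule A Y := OrderDual.ofDual (f n)
  have hB : Antitone B := fun m n h ↦ f.monotone h
  obtain ⟨n, hn⟩ := exists_forall_le_eq_of_antitone_of_le (h := fun n ↦ torsionLayer x (B n) n)
    (fun _ _ h ↦ torsionLayer_mono (hB h) h) fun _ ↦ torsionLayer_le _ _ _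
  choose N hN using fun j ↦ exists_forall_le_eq_of_antitone_of_le
    (h := fun n ↦ torsionLayer x (B n) j)
    (fun _ _ h ↦ torsionLayer_mono (hB h) le_rfl) fun _ ↦ torsionLayer_le _ _ _
  let M := n ⊔ (Finset.range n).sup N
  refine ⟨M, fun m hm ↦ le_antisymm (α := Submodule A Y) ?_ (hB hm)⟩
  refine le_of_torsionLayer_le hx (hB hm) fun j ↦ ?_
  rcases lt_or_ge j n with hj | hj
  · have hjM : N j ≤ M := (Finset.le_sup (Finset.mem_range.2 hj)).trans le_sup_right
    exact ((hN j M hjM).trans (hN j m (hjM.trans hm)).symm).le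
  · calc torsionLayer x (B M) j ≤ torsionLayer x (B n) n := torsionLayer_mono (hB le_sup_left) hj
      _ = torsionLayer x (B (max j m)) (max j m) := (hn _ (hj.trans (le_max_left _ _))).symm
      _ ≤ torsionLayer x (B m) j := torsionLayer_mono (hB (le_max_right _ _)) (le_max_left _ _)

lemma isArtinian_of_torsionBySet {I : Ideal A} (hI : I.FG)
    (h : ∀ x ∈ I, ∀ y : Y, ∃ n : ℕ, x ^ n • y = 0)
    (hT : IsArtinian A (torsionBySet A Y (I : Set A))) : IsArtinian A Y := by
  induction I, hI using Submodule.fg_induction generalizing Y with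
  | singleton x =>
    rw [torsionBySet_span_singleton_eq] at hT
    exact isArtinian_of_torsionBy (h x (mem_span_singleton_self x))
  | sup I J _ _ ihI ihJ =>
    refine ihI (fun x hx ↦ h x (mem_sup_left hx)) (ihJ (fun x hx y ↦ ?_) ?_)
    · obtain ⟨n, hn⟩ := h x (mem_sup_right hx) y
      exact ⟨n, Subtype.ext hn⟩
    · refine isArtinian_of_injective (LinearMap.codRestrict
        (torsionBySet A Y ((I ⊔ J : Ideal A) : Set A)) (Submodule.subtype _ ∘ₗ Submodule.subtype _)
        fun y ↦ (mem_torsionBySet_iff _ _).2 fun ⟨x, hx⟩ ↦ ?_)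
        (fun y z h ↦ Subtype.ext (Subtype.ext congr(($h : Y))))
      obtain ⟨a, ha, b, hb, rfl⟩ := Submodule.mem_sup.1 hx
      have h₁ : a • ((y : torsionBySet A Y (I : Set A)) : Y) = 0 :=
        (mem_torsionBySet_iff _ _).1 y.1.2 ⟨a, ha⟩
      have h₂ : b • (y : torsionBySet A Y (I : Set A)) = 0 :=
        (mem_torsionBySet_iff _ _).1 y.2 ⟨b, hb⟩
      simpa [add_smul, h₁] using congr(($h₂ : Y))

lemma isArtinian_of_support_subset_isMaximal [IsNoetherianRing A] [Module.Finite A Y]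
    (h : ∀ p ∈ Module.support A Y, p.asIdeal.IsMaximal) : IsArtinian A Y := by
  let J := Module.annihilator A Y
  have : Ring.KrullDimLE 0 (A ⧸ J) := by
    refine Ring.krullDimLE_zero_iff.2 fun P hP ↦ ?_
    have hle : J ≤ P.comap (Ideal.Quotient.mk J) :=
      Ideal.mk_ker.symm.trans_le (Ideal.comap_mono bot_le)
    have := h ⟨P.comap (Ideal.Quotient.mk J), inferInstance⟩
      (Module.mem_support_iff_of_finite.2 hle)
    rw [← Ideal.map_comap_of_surjective _ Ideal.Quotient.mk_surjective P]
    exact (Ideal.map_eq_top_or_isMaximal_of_surjective _ Ideal.Quotient.mk_surjective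
      this).resolve_left fun h ↦ hP.ne_top
        ((Ideal.map_comap_of_surjective _ Ideal.Quotient.mk_surjective P).symm.trans h)
  have : IsArtinianRing (A ⧸ J) := IsNoetherianRing.isArtinianRing_of_krullDimLE_zero
  let _ : Module (A ⧸ J) Y := Module.quotientAnnihilator
  have : IsScalarTower A (A ⧸ J) Y := (Module.isTorsionBySet_annihilator A Y).isScalarTower
  have : Module.Finite (A ⧸ J) Y := Module.Finite.of_restrictScalars_finite A _ _
  have : IsArtinian (A ⧸ J) Y := isArtinian_of_fg_of_artinian'
  exact isArtinian_of_surjective_algebraMap (R := A ⧸ J) Ideal.Quotient.mk_surjective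

end Artinian

section Secondary

open Submodule

open scoped Pointwise

variable {A Y : Type*} [CommRing A] [AddCommGroup Y] [Module A Y]

section SupIrred

variable {W : Submodule A Y} (hW : SupIrred W)
include hW

lemma le_smul_or_mem_radical_annihilator_of_supIrred [IsArtinian A Y] (r : A) :
    W ≤ r • W ∨ r ∈ W.annihilator.radical := by
  let φ : Module.End A W := DistribSMul.toLinearMap A W r
  have hφ (n : ℕ) (w : W) : ((φ ^ n) w : Y) = r ^ n • (w : Y) := by
    induction n with
    | zero => simp
    | succ n ih => simp [pow_succ', mul_smul, φ, ih]
  obtain ⟨n, hn, hn'⟩ := (φ.eventually_codisjoint_ker_pow_range_pow.and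
    (Filter.eventually_gt_atTop 0)).exists
  have hsup : (LinearMap.ker (φ ^ n)).map W.subtype ⊔ (LinearMap.range (φ ^ n)).map W.subtype =
      W := by
    rw [← Submodule.map_sup, hn.eq_top, map_subtype_top]
  rcases hW.2 hsup with h | h
  · refine .inr ⟨n, mem_annihilator.2 fun w hw ↦ ?_⟩
    obtain ⟨w, hw', rfl⟩ := h.ge hw
    exact (hφ n w).symm.trans (congrArg Subtype.val hw')
  · refine .inl fun w hw ↦ ?_
    obtain ⟨_, ⟨w, rfl⟩, rfl⟩ := h.ge hw
    obtain ⟨n, rfl⟩ := Nat.exists_eq_succ_of_ne_zero hn'.ne'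
    rw [subtype_apply, hφ, pow_succ', mul_smul]
    exact smul_mem_pointwise_smul _ _ _ (W.smul_mem _ w.2)

lemma notMem_radical_annihilator_of_supIrred {r : A} (h : W ≤ r • W) :
    r ∉ W.annihilator.radical := by
  rintro ⟨n, hn⟩
  induction n with
  | zero =>
    have : W = ⊥ := annihilator_eq_top_iff.1 ((Ideal.eq_top_iff_one _).2 (pow_zero r ▸ hn))
    exact hW.ne_bot this
  | succ n ih =>
    refine ih (mem_annihilator.2 fun w hw ↦ ?_)
    obtain ⟨w', hw', rfl⟩ := h hw
    simpa [← mul_smul, ← pow_succ] using mem_annihilator.1 hn w' hw'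

lemma isPrime_radical_annihilator_of_supIrred [IsArtinian A Y] :
    W.annihilator.radical.IsPrime := by
  refine Ideal.isPrime_iff.2 ⟨fun h ↦ hW.ne_bot ?_, fun {r s} hrs ↦ ?_⟩
  · exact annihilator_eq_top_iff.1 (Ideal.radical_eq_top.1 h)
  · by_contra! h
    have hr := (le_smul_or_mem_radical_annihilator_of_supIrred hW r).resolve_right h.1
    have hs := (le_smul_or_mem_radical_annihilator_of_supIrred hW s).resolve_right h.2
    refine notMem_radical_annihilator_of_supIrred hW ?_ hrs
    rw [mul_smul]
    exact hr.trans (smul_mono_right r hs)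

lemma holdsGenerically_fg_map_mkQ_of_supIrred [IsNoetherianRing A] [IsArtinian A Y] {I : Ideal A}
    [Module.Finite A (torsionBySet A Y (I : Set A))] :
    HoldsGenerically I fun x ↦ (W.map (x • ⊤ : Submodule A Y).mkQ).FG := by
  by_cases hI : I ≤ W.annihilator.radical
  · let ι : torsionBySet A W (I : Set A) →ₗ[A] torsionBySet A Y (I : Set A) :=
      W.subtype.restrict fun w hw ↦ (mem_torsionBySet_iff _ _).2 fun r ↦
        congr(($((mem_torsionBySet_iff _ _).1 hw r) : Y))
    have : Module.Finite A W := finiteByDimLT_zero_iff.1 <|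
      prop_of_radicalAnnihilated _ (IsNoetherian.noetherian I)
        (by rwa [radicalAnnihilated]) <|
      prop_of_injective _ ι (fun y z h ↦ Subtype.ext (Subtype.ext congr(($h : Y)))) <|
      finiteByDimLT_zero_iff.2 inferInstance
    exact ⟨∅, Set.finite_empty, by simp, fun x _ _ ↦ .map _ (Module.Finite.iff_fg.1 this)⟩
  · refine ⟨{⟨_, isPrime_radical_annihilator_of_supIrred hW⟩}, Set.finite_singleton _, by simpa,
      fun x _ hx ↦ ?_⟩
    have hle : W ≤ x • ⊤ :=
      ((le_smul_or_mem_radical_annihilator_of_supIrred hW x).resolve_right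
        (hx _ rfl)).trans (smul_mono_right x le_top)
    change (W.map (x • ⊤ : Submodule A Y).mkQ).FG
    rw [(LinearMap.le_ker_iff_map (f := mkQ _)).1 (by rwa [ker_mkQ])]
    exact fg_bot

end SupIrred

lemma holdsGenerically_finite_quotSMulTop [IsNoetherianRing A] [IsArtinian A Y] {I : Ideal A}
    [Module.Finite A (torsionBySet A Y (I : Set A))] :
    HoldsGenerically I fun x ↦ Module.Finite A (QuotSMulTop x Y) := by
  obtain ⟨s, hs, hirr⟩ := exists_supIrred_decomposition (⊤ : Submodule A Y)
  have : HoldsGenerically I fun x ↦ ∀ W ∈ s, (W.map (x • ⊤ : Submodule A Y).mkQ).FG :=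
    .forall_mem s fun W hW ↦ holdsGenerically_fg_map_mkQ_of_supIrred (hirr hW)
  refine this.imp fun x hx ↦ Module.finite_def.2 ?_
  have hx' := fg_finset_sup s _ hx
  rwa [← Function.comp_id (Submodule.map _), ← Finset.apply_sup_eq_sup_comp _
    (fun _ _ ↦ Submodule.map_sup _ _ _) (Submodule.map_bot _), hs, Submodule.map_top,
    range_mkQ] at hx'

end Secondary

section Localization

open Submodule

open scoped Pointwise

variable {R : Type u} [CommRing R] {X : Type v} [AddCommGroup X] [Module R X]

lemma support_subset_notDisjoint_iff {S : Submonoid R} :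
    Module.support R X ⊆ {p | ¬ Disjoint (p.asIdeal : Set R) S} ↔
      ∀ m : X, ∃ s ∈ S, s • m = 0 := by
  refine ⟨fun h m ↦ ?_, fun h p hp ↦ ?_⟩
  · by_contra! hm
    have : Disjoint ((R ∙ m).annihilator : Set R) S := Set.disjoint_left.2 fun s hs hsS ↦
      hm s hsS ((mem_annihilator_span_singleton m s).1 hs)
    obtain ⟨p, hp, hle, hdisj⟩ := Ideal.exists_le_prime_disjoint _ S this
    exact h (Module.mem_support_iff_exists_annihilator (p := ⟨p, hp⟩).2 ⟨m, hle⟩) hdisj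
  · obtain ⟨m, hm⟩ := Module.mem_support_iff_exists_annihilator.1 hp
    obtain ⟨s, hs, hsm⟩ := h m
    exact Set.not_disjoint_iff.2 ⟨s, hm ((mem_annihilator_span_singleton m s).2 hsm), hs⟩

lemma exists_pow_smul_eq_zero_of_support_subset {𝔞 : Ideal R}
    (h : Module.support R X ⊆ PrimeSpectrum.zeroLocus 𝔞) {x : R} (hx : x ∈ 𝔞) (m : X) :
    ∃ n : ℕ, x ^ n • m = 0 := by
  obtain ⟨_, ⟨n, rfl⟩, hn⟩ := (support_subset_notDisjoint_iff (S := Submonoid.powers x)).1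
    (fun p hp ↦ Set.not_disjoint_iff.2 ⟨x, h hp hx, Submonoid.mem_powers x⟩) m
  exact ⟨n, hn⟩

variable (S : Submonoid R) {Y A : Type*} [AddCommGroup Y] [Module R Y] [CommRing A] [Algebra R A]
  [Module A Y] [IsScalarTower R A Y] (f : X →ₗ[R] Y) [IsLocalizedModule S f]

include S f in
lemma comap_mem_support_of_isLocalizedModule {q : PrimeSpectrum A} (hq : q ∈ Module.support A Y) :
    PrimeSpectrum.comap (algebraMap R A) q ∈ Module.support R X := by
  obtain ⟨y, hy⟩ := Module.mem_support_iff_exists_annihilator.1 hq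
  obtain ⟨⟨m, s⟩, rfl⟩ := IsLocalizedModule.mk'_surjective S f y
  refine Module.mem_support_iff_exists_annihilator.2 ⟨m, fun r hr ↦ hy ?_⟩
  rw [mem_annihilator_span_singleton] at hr ⊢
  rw [algebraMap_smul, Function.uncurry_apply_pair, ← IsLocalizedModule.mk'_smul, hr,
    IsLocalizedModule.mk'_zero]

variable [IsLocalization S A]

include f in
lemma finiteBy_supportedIn_iff_finite :
    finiteBy (supportedIn {p | ¬ Disjoint (p.asIdeal : Set R) S}) (.of R X) ↔
      Module.Finite A Y := by
  have key (L : Submodule R X) :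
      supportedIn {p | ¬ Disjoint (p.asIdeal : Set R) S} (.of R (X ⧸ L)) ↔
        L.localized' A S f = ⊤ := by
    rw [← Submodule.Quotient.subsingleton_iff,
      IsLocalizedModule.subsingleton_iff S (L.toLocalizedQuotient' A S f)]
    exact support_subset_notDisjoint_iff
  refine ⟨fun ⟨L, hL, h⟩ ↦ ⟨(key L).1 h ▸ localized'_fg A S f hL⟩, fun h ↦ ?_⟩
  have hfg : (span A (f '' Set.univ)).FG := by
    rw [← top_coe (R := R) (M := X), ← localized'_eq_span A S, localized'_top]
    exact h.fg_top
  obtain ⟨t, ht, hspan⟩ := (fg_span_iff_fg_span_finset_subset _).1 hfg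
  classical
  obtain ⟨t, -, rfl⟩ := Finset.subset_set_image_iff.1 ht
  refine ⟨span R t, fg_span t.finite_toSet, (key _).2 ?_⟩
  rw [localized'_span, ← Finset.coe_image, ← hspan, ← top_coe (R := R) (M := X),
    ← localized'_eq_span A S, localized'_top]

lemma localized'_torsionBySet {𝔞 : Ideal R} (h𝔞 : 𝔞.FG) :
    (torsionBySet R X (𝔞 : Set R)).localized' A S f =
      torsionBySet A Y (𝔞.map (algebraMap R A) : Set A) := by
  induction 𝔞, h𝔞 using Submodule.fg_induction with
  | singleton x =>
    rw [torsionBySet_span_singleton_eq, ← Ideal.span, Ideal.map_span, Set.image_singleton,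
      Ideal.span, torsionBySet_span_singleton_eq, torsionBy, torsionBy,
      LinearMap.localized'_ker_eq_ker_localizedMap A S f f]
    congr 1
    ext y
    obtain ⟨⟨m, s⟩, rfl⟩ := IsLocalizedModule.mk'_surjective S f y
    simp [IsLocalizedModule.map_mk', IsLocalizedModule.mk'_smul]
  | sup I J _ _ hI hJ =>
    have := (torsion_gc R X).u_inf (b₁ := OrderDual.toDual I) (b₂ := OrderDual.toDual J)
    rw [Ideal.map_sup]
    exact (congrArg (localized' A S f) this).trans <| (localized'_inf ..).trans <|
      (congrArg₂ _ hI hJ).trans (torsion_gc A Y).u_inf.symm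

lemma localized'_smul_top (x : R) :
    (x • ⊤ : Submodule R X).localized' A S f = algebraMap R A x • ⊤ := by
  rw [← ideal_span_singleton_smul, ← ideal_span_singleton_smul, localized'_smul, localized'_top]
  congr 1
  simp [Ideal.span, localized'_span]

variable [IsNoetherianRing R] {𝔞 : Ideal R}

include f in
lemma isArtinian_of_isAntichain_support (hX : Module.support R X ⊆ PrimeSpectrum.zeroLocus 𝔞)
    (hS : IsAntichain (· ≤ ·) {p ∈ Module.support R X | Disjoint (p.asIdeal : Set R) S})
    [Module.Finite A (torsionBySet A Y (𝔞.map (algebraMap R A) : Set A))] : IsArtinian A Y := by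
  have : IsNoetherianRing A := IsLocalization.isNoetherianRing S A inferInstance
  have hcomap {q : PrimeSpectrum A} (hq : q ∈ Module.support A Y) :
      PrimeSpectrum.comap (algebraMap R A) q ∈
        {p ∈ Module.support R X | Disjoint (p.asIdeal : Set R) S} :=
    ⟨comap_mem_support_of_isLocalizedModule S f hq,
      ((IsLocalization.isPrime_iff_isPrime_disjoint S A q.asIdeal).1 q.2).2.symm⟩
  have hmax {p : PrimeSpectrum A} (hp : p ∈ Module.support A Y) : p.asIdeal.IsMaximal := by
    obtain ⟨m, hm, hle⟩ := Ideal.exists_le_maximal _ p.2.ne_top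
    have := hS.eq (hcomap hp) (hcomap (Module.mem_support_mono (q := ⟨m, hm.isPrime⟩) hle hp))
      (Ideal.comap_mono hle)
    exact (PrimeSpectrum.localization_comap_injective A S this) ▸ hm
  have hY : Module.support A Y ⊆ PrimeSpectrum.zeroLocus (𝔞.map (algebraMap R A)) :=
    fun q hq ↦ Ideal.map_le_iff_le_comap.2 (hX (hcomap hq).1)
  exact isArtinian_of_torsionBySet (IsNoetherian.noetherian _)
    (fun x hx ↦ exists_pow_smul_eq_zero_of_support_subset hY hx)
    (isArtinian_of_support_subset_isMaximal fun p hp ↦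
      hmax (Module.support_subset_of_injective _ (injective_subtype _) hp))

variable {S} in
lemma holdsGenerically_finiteBy_supportedIn_quotSMulTop
    (hX : Module.support R X ⊆ PrimeSpectrum.zeroLocus 𝔞)
    (hS : IsAntichain (· ≤ ·) {p ∈ Module.support R X | Disjoint (p.asIdeal : Set R) S})
    (hT : finiteBy (supportedIn {p | ¬ Disjoint (p.asIdeal : Set R) S})
      (.of R (torsionBySet R X (𝔞 : Set R)))) :
    HoldsGenerically 𝔞 fun x ↦ finiteBy (supportedIn {p | ¬ Disjoint (p.asIdeal : Set R) S})
      (.of R (QuotSMulTop x X)) := by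
  let A := Localization S
  let f := LocalizedModule.mkLinearMap S X
  have : IsNoetherianRing A := IsLocalization.isNoetherianRing S A inferInstance
  have : Module.Finite A
      (torsionBySet A (LocalizedModule S X) (𝔞.map (algebraMap R A) : Set A)) := by
    rw [← localized'_torsionBySet S f (IsNoetherian.noetherian 𝔞)]
    exact (finiteBy_supportedIn_iff_finite S (toLocalized' A S f _)).1 hT
  have := isArtinian_of_isAntichain_support S f hX hS (A := A)
  have hgen : HoldsGenerically (𝔞.map (algebraMap R A))
      fun x ↦ Module.Finite A (QuotSMulTop x (LocalizedModule S X)) :=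
    holdsGenerically_finite_quotSMulTop
  refine hgen.of_map.imp fun x hx ↦
    (finiteBy_supportedIn_iff_finite (A := A) S (toLocalizedQuotient' A S f _)).2 ?_
  rw [localized'_smul_top]
  exact hx

end Localization

section GenericQuotient

open Submodule

variable {R : Type u} [CommRing R] {X : Type v} [AddCommGroup X] [Module R X]
  {Z Z' : Set (PrimeSpectrum R)}

lemma exists_submonoid_disjoint_iff {T : Set (PrimeSpectrum R)} (hT : T.Finite) :
    ∃ S : Submonoid R, ∀ I : Ideal R, Disjoint (I : Set R) S ↔ ∃ t ∈ T, I ≤ t.asIdeal := by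
  refine ⟨⨅ t ∈ T, t.asIdeal.primeCompl, fun I ↦ ?_⟩
  obtain rfl | ⟨t₀, -⟩ := T.eq_empty_or_nonempty
  · simpa using I.nonempty.ne_empty
  rw [← Ideal.subset_union_prime_finite hT (f := PrimeSpectrum.asIdeal) t₀ t₀ fun t _ _ _ ↦ t.2,
    Set.disjoint_left]
  simp [Set.subset_def]

lemma finiteBy_supportedIn_of_support_inter_subset (h : Module.support R X ∩ Z ⊆ Z')
    (hX : finiteBy (supportedIn Z) (.of R X)) : finiteBy (supportedIn Z') (.of R X) := by
  obtain ⟨L, hL, hXL⟩ := hX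
  exact ⟨L, hL, fun p hp ↦
    h ⟨Module.support_subset_of_surjective L.mkQ L.mkQ_surjective hp, hXL hp⟩⟩

lemma minimal_support_of_coheight {k : ℕ}
    (hX : Module.support R X ⊆ {p | Order.coheight p < k + 1}) {p : PrimeSpectrum R}
    (hp : p ∈ Module.support R X) (hpk : ¬ Order.coheight p < k) :
    Minimal (· ∈ Module.support R X) p := by
  refine minimal_iff_forall_lt.2 ⟨hp, fun q hqp hq ↦ ?_⟩
  have : Order.coheight q < k + 1 := hX hq
  refine this.not_ge ?_
  grw [← Order.coheight_add_one_le hqp, not_lt.1 hpk]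

variable [IsNoetherianRing R]

lemma mem_support_of_isAssociatedPrime {p : PrimeSpectrum R}
    (hp : IsAssociatedPrime p.asIdeal X) : p ∈ Module.support R X := by
  obtain ⟨-, m, hm⟩ := isAssociatedPrime_iff.1 hp
  exact Module.mem_support_iff_exists_annihilator.2 ⟨m, bot_colon'.ge.trans hm.ge⟩

lemma isAssociatedPrime_torsionBySet_of_minimal_support {𝔞 : Ideal R} {p : PrimeSpectrum R}
    (h𝔞 : 𝔞 ≤ p.asIdeal) (hp : Minimal (· ∈ Module.support R X) p) :
    IsAssociatedPrime p.asIdeal (torsionBySet R X (𝔞 : Set R)) := by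
  obtain ⟨m, hm⟩ := Module.mem_support_iff_exists_annihilator.1 hp.1
  have hmin : p.asIdeal ∈ ((⊥ : Submodule R X).colon {m}).minimalPrimes := by
    refine ⟨⟨p.2, bot_colon'.le.trans hm⟩, fun q hq hqp ↦ hp.2 (y := ⟨q, hq.1⟩) ?_ hqp⟩
    exact Module.mem_support_iff_exists_annihilator.2 ⟨m, bot_colon'.ge.trans hq.2⟩
  obtain ⟨m', hm'⟩ := exists_eq_colon_of_mem_minimalPrimes hmin
  have hmem : m' ∈ torsionBySet R X (𝔞 : Set R) := (mem_torsionBySet_iff _ _).2 fun r ↦ by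
    simpa [hm', mem_colon_singleton] using h𝔞 r.2
  refine isAssociatedPrime_iff.2 ⟨p.2, ⟨m', hmem⟩, hm'.trans ?_⟩
  ext r
  simp [mem_colon_singleton, ← Subtype.val_inj]

lemma finite_minimal_support_of_finiteBy_torsionBySet {𝔞 : Ideal R}
    (hX : Module.support R X ⊆ PrimeSpectrum.zeroLocus 𝔞)
    (hT : finiteBy (supportedIn Z) (.of R (torsionBySet R X (𝔞 : Set R)))) :
    {p | Minimal (· ∈ Module.support R X) p ∧ p ∉ Z}.Finite := by
  obtain ⟨L, hL, hZ⟩ := hT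
  have : Module.Finite R L := Module.Finite.iff_fg.2 hL
  refine ((associatedPrimes.finite R L).preimage
    fun _ _ _ _ ↦ PrimeSpectrum.ext).subset fun p ⟨hp, hpZ⟩ ↦ ?_
  refine (associatedPrimes.subset_union_of_exact L.injective_subtype
    (LinearMap.exact_subtype_mkQ L)
    (isAssociatedPrime_torsionBySet_of_minimal_support (hX hp.1) hp)).resolve_right fun h ↦ ?_
  exact hpZ (hZ (mem_support_of_isAssociatedPrime h))

lemma holdsGenerically_finiteBy_quotSMulTop_of_minimal_support {𝔞 : Ideal R}
    (hX : Module.support R X ⊆ PrimeSpectrum.zeroLocus 𝔞)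
    (hZ : ∀ p ∈ Module.support R X, p ∉ Z → Minimal (· ∈ Module.support R X) p)
    (hT : finiteBy (supportedIn Z) (.of R (torsionBySet R X (𝔞 : Set R)))) :
    HoldsGenerically 𝔞 fun x ↦ finiteBy (supportedIn Z) (.of R (QuotSMulTop x X)) := by
  obtain ⟨S, hS⟩ := exists_submonoid_disjoint_iff
    (finite_minimal_support_of_finiteBy_torsionBySet hX hT)
  have hSZ {p} (hp : p ∈ Module.support R X) : Disjoint (p.asIdeal : Set R) S ↔ p ∉ Z := by
    rw [hS]
    exact ⟨fun ⟨t, ht, hpt⟩ ↦ (ht.1.eq_of_le hp hpt) ▸ ht.2, fun h ↦ ⟨p, ⟨hZ p hp h, h⟩, le_rfl⟩⟩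
  refine (holdsGenerically_finiteBy_supportedIn_quotSMulTop (S := S) hX ?_ ?_).imp fun x hx ↦ ?_
  · exact fun p hp q hq hne hpq ↦
      hne ((hZ q hq.1 ((hSZ hq.1).1 hq.2)).eq_of_le hp.1 hpq)
  · refine finiteBy_supportedIn_of_support_inter_subset (fun p hp hpS ↦ ?_) hT
    exact (hSZ (Module.support_subset_of_injective _ (injective_subtype _) hp.1)).1 hpS hp.2
  · refine finiteBy_supportedIn_of_support_inter_subset (fun p hp ↦ ?_) hx
    by_contra hpZ
    exact hp.2 ((hSZ (Module.support_subset_of_surjective _ (mkQ_surjective _) hp.1)).2 hpZ)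

lemma holdsGenerically_finiteByDimLT_quotSMulTop {𝔞 : Ideal R} {X : ModuleCat.{u} R} {k : ℕ}
    (hX𝔞 : Module.support R X ⊆ PrimeSpectrum.zeroLocus 𝔞) (hX : finiteByDimLT R (k + 1) X)
    (h : finiteByDimLT R k ((extIdealFunctor 𝔞 0).obj X)) :
    HoldsGenerically 𝔞 fun x ↦ finiteByDimLT R k (.of R (QuotSMulTop x X)) := by
  obtain ⟨L, hL, hXL⟩ := hX
  have : Module.Finite R (LinearMap.ker L.mkQ) := Module.Finite.iff_fg.2 (L.ker_mkQ.symm ▸ hL)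
  have hS := LinearMap.shortExact_shortComplexKer L.mkQ_surjective
  have hquot : finiteByDimLT R k ((extIdealFunctor 𝔞 0).obj (.of R (X ⧸ L))) := by
    obtain ⟨δ, hδ, _, hexact, -⟩ :=
      IsDeltaFunctor.exists_connecting (F := extIdealFunctor 𝔞) 0 hS
    exact ObjectProperty.prop_X₂_of_exact _ hexact h
      (prop_extLinearFunctor_obj _ (finiteBy_of_finite _) _ 1)
  refine (holdsGenerically_finiteBy_quotSMulTop_of_minimal_support
    ((Module.support_subset_of_surjective L.mkQ L.mkQ_surjective).trans hX𝔞)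
    (fun p ↦ minimal_support_of_coheight (by exact_mod_cast hXL))
    (prop_torsionBySet _ hquot)).imp fun x hx ↦ ?_
  exact finiteBy_of_exact
    (QuotSMulTop.map_exact x (LinearMap.exact_subtype_ker_map L.mkQ) L.mkQ_surjective)
    (QuotSMulTop.map_surjective x L.mkQ_surjective) (finiteBy_of_finite _) hx

end GenericQuotient

/-! ### Cofiniteness -/

section LinearPullback

open Limits

variable {R C : Type*} [CommRing R] [Category* C] [Abelian C] [Linear R C]
  {A B P : C} {f : A ⟶ B} {p : P ⟶ A} {q : P ⟶ B} {g : A ⟶ P} {x : R}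

lemma kernel_smul_id_eq_zero (h : g ≫ p = x • 𝟙 A) : x • 𝟙 (kernel g) = 0 := by
  rw [← cancel_mono (kernel.ι g), zero_comp, Linear.smul_comp, Category.id_comp,
    ← Category.comp_id (kernel.ι g), ← Linear.comp_smul, ← h, kernel.condition_assoc, zero_comp]

lemma smul_id_kernel_smul_id (x : R) (A : C) : x • 𝟙 (kernel (x • 𝟙 A)) = 0 :=
  kernel_smul_id_eq_zero (Category.comp_id _)

lemma cokernel_smul_id_eq_zero (h : p ≫ g = x • 𝟙 P) : x • 𝟙 (cokernel g) = 0 := by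
  rw [← cancel_epi (cokernel.π g), comp_zero, Linear.comp_smul, Category.comp_id,
    ← Category.id_comp (cokernel.π g), ← Linear.smul_comp, ← h, Category.assoc,
    cokernel.condition, comp_zero]

lemma fst_comp_eq_smul_id (hP : IsPullback p q f (x • 𝟙 B)) (hgq : g ≫ q = f)
    (hgp : g ≫ p = x • 𝟙 A) : p ≫ g = x • 𝟙 P :=
  hP.hom_ext (by simp [hgp]) (by simp [hgq, hP.w])

lemma exists_isPullback_smul_id (x : R) (f : A ⟶ B) :
    ∃ (P : C) (p : P ⟶ A) (q : P ⟶ B) (g : A ⟶ P),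
      IsPullback p q f (x • 𝟙 B) ∧ g ≫ p = x • 𝟙 A ∧ g ≫ q = f := by
  have hP := IsPullback.of_hasPullback f (x • 𝟙 B)
  obtain ⟨g, hgp, hgq⟩ := hP.exists_lift (x • 𝟙 A) f (by simp)
  exact ⟨_, _, _, g, hP, hgp, hgq⟩

variable (S : ObjectProperty C) [S.IsSerreClass]

lemma prop_kernel_of_comp_eq (hgq : g ≫ q = f) (hf : S (kernel f)) : S (kernel g) := by
  have h : kernel.ι g ≫ f = 0 := by rw [← hgq, kernel.condition_assoc, zero_comp]
  have := mono_of_mono_fac (kernel.lift_ι f (kernel.ι g) h)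
  exact S.prop_of_mono (kernel.lift f (kernel.ι g) h) hf

lemma prop_X₂_of_exact_of_smul_eq_zero {X Y Z : C} {d : X ⟶ Y} {e : Y ⟶ Z}
    (hd : x • d = 0) {hde : d ≫ e = 0} (h : (ShortComplex.mk d e hde).Exact)
    (hX : S (cokernel (x • 𝟙 X))) (hZ : S Z) : S Y := by
  let d' : cokernel (x • 𝟙 X) ⟶ Y := cokernel.desc _ d (by simpa using hd)
  have hd' : cokernel.π _ ≫ d' = d := cokernel.π_desc _ _ _
  have hd'e : d' ≫ e = 0 := by rw [← cancel_epi (cokernel.π _), reassoc_of% hd', hde, comp_zero]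
  refine S.prop_X₂_of_exact (S := ShortComplex.mk d' e hd'e) ?_ hX hZ
  let φ : ShortComplex.mk d e hde ⟶ ShortComplex.mk d' e hd'e :=
    { τ₁ := cokernel.π (x • 𝟙 X), τ₂ := 𝟙 Y, τ₃ := 𝟙 Z }
  exact (ShortComplex.exact_iff_of_epi_of_isIso_of_mono φ).1 h

lemma prop_cokernel_of_isPullback (hP : IsPullback p q f (x • 𝟙 B)) (hgq : g ≫ q = f)
    (hgp : g ≫ p = x • 𝟙 A) (hK : S (cokernel (x • 𝟙 (kernel f)))) (hN : S (cokernel f)) :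
    S (cokernel g) := by
  subst hgq
  have := isIso_kernel_map_of_isPullback hP.flip
  let e := asIso (kernel.map q (g ≫ q) p (x • 𝟙 B) hP.flip.w)
  refine prop_X₂_of_exact_of_smul_eq_zero S (d := kernelCokernelCompSequence.δ g q) ?_
    ((kernelCokernelCompSequence_exact g q).exact 2)
    (S.prop_of_iso (cokernel.mapIso (x • 𝟙 _) (x • 𝟙 _) e.symm e.symm (by simp)) hK) hN
  rw [kernelCokernelCompSequence.δ_fac]
  have hpg := fst_comp_eq_smul_id hP rfl hgp
  calc x • (-kernel.ι q ≫ cokernel.π g) = -kernel.ι q ≫ (x • 𝟙 P) ≫ cokernel.π g := by simp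
    _ = 0 := by simp [← hpg]

lemma prop_cokernel_desc_neg_smul_id (h : S (cokernel (x • 𝟙 (cokernel f)))) :
    S (cokernel (biprod.desc f (-(x • 𝟙 B)))) := by
  set d := biprod.desc f (-(x • 𝟙 B)) with hd
  have hf : f ≫ cokernel.π d = 0 := by
    simpa [hd] using biprod.inl ≫= cokernel.condition d
  have hx : x • cokernel.π d = 0 := by
    simpa [hd] using biprod.inr ≫= cokernel.condition d
  have hx' : (x • 𝟙 (cokernel f)) ≫ cokernel.desc f (cokernel.π d) hf = 0 := by
    rw [← cancel_epi (cokernel.π f)]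
    simp [hx]
  have : Epi (cokernel.desc f (cokernel.π d) hf) := epi_of_epi_fac (cokernel.π_desc _ _ hf)
  have := epi_of_epi_fac (cokernel.π_desc _ _ hx')
  exact S.prop_of_epi (cokernel.desc _ _ hx') h

end LinearPullback

section Cofinite

open Limits
open scoped Pointwise ZeroObject

variable {R : Type u} [CommRing R]

lemma epi_map_iff_isZero_obj_cokernel {C D : Type*} [Category* C] [Abelian C] [Category* D]
    [Abelian D] (L : C ⥤ D) [L.Additive] [PreservesFiniteColimits L] {X Y : C} (f : X ⟶ Y) :
    Epi (L.map f) ↔ IsZero (L.obj (cokernel f)) := by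
  rw [Preadditive.epi_iff_isZero_cokernel, (PreservesCokernel.iso L f).isZero_iff]

lemma mono_map_iff_isZero_obj_kernel {C D : Type*} [Category* C] [Abelian C] [Category* D]
    [Abelian D] (L : C ⥤ D) [L.Additive] [PreservesFiniteLimits L] {X Y : C} (f : X ⟶ Y) :
    Mono (L.map f) ↔ IsZero (L.obj (kernel f)) := by
  rw [Preadditive.mono_iff_isZero_kernel, (PreservesKernel.iso L f).isZero_iff]

lemma prop_cokernel_smul_id (P : ObjectProperty (ModuleCat.{u} R)) [P.IsSerreClass]
    {X : ModuleCat.{u} R} {x : R} (h : P (.of R (QuotSMulTop x X))) :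
    P (cokernel (x • 𝟙 X)) := by
  have hle : x • (⊤ : Submodule R X) ≤ LinearMap.ker (cokernel.π (x • 𝟙 X)).hom := by
    rintro _ ⟨y, -, rfl⟩
    exact congr($(cokernel.condition (x • 𝟙 X)) y)
  have hπ : Function.Surjective (cokernel.π (x • 𝟙 X)).hom :=
    (ModuleCat.epi_iff_surjective _).1 inferInstance
  exact prop_of_surjective P (Submodule.liftQ _ _ hle)
    (LinearMap.range_eq_top.1 (by rw [Submodule.range_liftQ, LinearMap.range_eq_top.2 hπ])) h

lemma ideal_induction_of_not_le [IsNoetherianRing R] {𝔞 : Ideal R} {C : Ideal R → Prop}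
    (𝔟 : Ideal R) (le : ∀ 𝔟, 𝔞 ≤ 𝔟 → C 𝔟)
    (not_le : ∀ 𝔟, ¬ 𝔞 ≤ 𝔟 → (∀ x ∉ 𝔟, C (𝔟 ⊔ Ideal.span {x})) → C 𝔟) : C 𝔟 := by
  induction 𝔟 using WellFoundedGT.induction with
  | ind 𝔟 ih =>
    by_cases h : 𝔞 ≤ 𝔟
    · exact le 𝔟 h
    · exact not_le 𝔟 h fun x hx ↦ ih _ (left_lt_sup.2 (by simpa using hx))

lemma finite_extIdeal_iff (𝔞 : Ideal R) (i : ℕ) (M : ModuleCat.{u} R) :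
    Module.Finite R (extIdeal 𝔞 i M) ↔ finiteByDimLT R 0 ((extIdealFunctor 𝔞 i).obj M) := by
  obtain ⟨e⟩ := nonempty_ext_linearEquiv (R := R) (X := ModuleCat.of R (R ⧸ 𝔞)) M i
  rw [finiteByDimLT_zero_iff]
  exact Module.Finite.equiv_iff e

lemma radicalAnnihilated_sup_span {X : ModuleCat.{v} R} {𝔟 : Ideal R} {x : R}
    (hX : radicalAnnihilated 𝔟 X) (hx : x • 𝟙 X = 0) :
    radicalAnnihilated (𝔟 ⊔ Ideal.span {x}) X :=
  sup_le hX <| (Ideal.span_singleton_le_iff_mem _).2 <| Ideal.le_radical <|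
    Module.mem_annihilator.2 fun y ↦ congr($hx y)

variable {𝔞 : Ideal R} {k l : ℕ} {X : ModuleCat.{u} R}

lemma prop_extIdealFunctor_obj_of_kernel_of_cokernel (P : ObjectProperty (ModuleCat.{u} R))
    [P.IsSerreClass] {n : ℕ} (hn : n < 2) {x : R} (hx : x ∈ 𝔞)
    (h : ∀ i ≤ n, P ((extIdealFunctor 𝔞 i).obj X))
    (hK : (∀ i ≤ n, P ((extIdealFunctor 𝔞 i).obj (kernel (x • 𝟙 X)))) →
      ∀ i, P ((extIdealFunctor 𝔞 i).obj (kernel (x • 𝟙 X))))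
    (hN : (∀ i < n, P ((extIdealFunctor 𝔞 i).obj (cokernel (x • 𝟙 X)))) →
      ∀ i, P ((extIdealFunctor 𝔞 i).obj (cokernel (x • 𝟙 X)))) (i : ℕ) :
    P ((extIdealFunctor 𝔞 i).obj X) := by
  obtain ⟨D, _, _, L, _, _, _, hL⟩ := exists_exact_functor_isZero_obj_iff P
  let F (i : ℕ) : ModuleCat.{u} R ⥤ D := extIdealFunctor 𝔞 i ⋙ L
  have hF (i : ℕ) (Y) : IsZero ((F i).obj Y) ↔ P ((extIdealFunctor 𝔞 i).obj Y) := hL _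
  simp only [← hF] at h hK hN ⊢
  have mono (i : ℕ) (hi : i ≤ n) : Mono ((F i).map (x • 𝟙 X)) := (h i hi).mono _
  have epi (i : ℕ) (hi : i ≤ n) : Epi ((F i).map (x • 𝟙 X)) := (h i hi).epi _
  have hK := hK fun i hi ↦ by
    obtain rfl | rfl : i = 0 ∨ i = 1 := by lia
    · exact IsDeltaFunctor.isZero_obj_zero_kernel F (mono 0 hi)
    · exact IsDeltaFunctor.isZero_obj_one_kernel F (epi 0 (by lia)) (mono 1 hi)
  have hN := hN fun i hi ↦ by
    obtain rfl : i = 0 := by lia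
    exact IsDeltaFunctor.isZero_obj_zero_cokernel F (epi 0 (by lia)) (mono 1 hi) (hK 2)
  have := IsDeltaFunctor.isIso_map_of_isZero_kernel_of_isZero_cokernel F hK hN i
  refine .of_mono_eq_zero ((F i).map (x • 𝟙 X)) ?_
  rw [Functor.comp_map, extIdealFunctor_map_smul_id hx, L.map_zero]

variable [IsNoetherianRing R]

/-- The modules in `FD_{<k}` supported in `V(𝔞)`. -/
abbrev finiteByDimLTIn (𝔞 : Ideal R) (k : ℕ) : ObjectProperty (ModuleCat.{u} R) :=
  supportedIn (PrimeSpectrum.zeroLocus 𝔞) ⊓ finiteByDimLT R k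

lemma holdsGenerically_finiteByDimLTIn_cokernel (hX : finiteByDimLTIn 𝔞 (k + 1) X)
    (h : finiteByDimLT R k ((extIdealFunctor 𝔞 0).obj X)) :
    HoldsGenerically 𝔞 fun x ↦ finiteByDimLTIn 𝔞 k (cokernel (x • 𝟙 X)) :=
  (holdsGenerically_finiteByDimLT_quotSMulTop hX.1 hX.2 h).imp fun _ hx ↦
    ⟨ObjectProperty.prop_of_epi _ (cokernel.π _) hX.1, prop_cokernel_smul_id _ hx⟩

lemma prop_extIdealFunctor_obj_of_radicalAnnihilated (P : ObjectProperty (ModuleCat.{u} R))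
    [P.IsSerreClass] {𝔟 : Ideal R} (h𝔟 : 𝔞 ≤ 𝔟) (hX : radicalAnnihilated 𝔟 X)
    (h : P ((extIdealFunctor 𝔞 0).obj X)) (i : ℕ) : P ((extIdealFunctor 𝔞 i).obj X) :=
  prop_extLinearFunctor_obj P (prop_of_radicalAnnihilated P 𝔞.fg_of_isNoetherianRing
    (h𝔟.trans hX) (prop_torsionBySet P h)) _ i

lemma finiteByDimLT_extIdealFunctor_obj_of_radicalAnnihilated {n : ℕ} (hn : n < 2) (hkl : k ≤ l)
    (ih : ∀ Y, finiteByDimLTIn 𝔞 l Y →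
      (∀ i < n, finiteByDimLT R k ((extIdealFunctor 𝔞 i).obj Y)) →
      ∀ i, finiteByDimLT R k ((extIdealFunctor 𝔞 i).obj Y))
    (𝔟 : Ideal R) (hX𝔟 : radicalAnnihilated 𝔟 X) (hX : finiteByDimLTIn 𝔞 (l + 1) X)
    (h : ∀ i ≤ n, finiteByDimLT R k ((extIdealFunctor 𝔞 i).obj X)) (i : ℕ) :
    finiteByDimLT R k ((extIdealFunctor 𝔞 i).obj X) := by
  induction 𝔟 using ideal_induction_of_not_le (𝔞 := 𝔞) generalizing X i with
  | le 𝔟 h𝔟 => exact prop_extIdealFunctor_obj_of_radicalAnnihilated _ h𝔟 hX𝔟 (h 0 n.zero_le) i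
  | not_le 𝔟 h𝔟 ih𝔟 =>
    obtain ⟨x, hx𝔞, hx𝔟, hx⟩ := (holdsGenerically_finiteByDimLTIn_cokernel hX
      (finiteByDimLT_mono hkl (h 0 n.zero_le))).exists_mem_notMem h𝔟
    have hK𝔟 : radicalAnnihilated 𝔟 (kernel (x • 𝟙 X)) :=
      ObjectProperty.prop_of_mono _ (kernel.ι (x • 𝟙 X)) hX𝔟
    have hKX : finiteByDimLTIn 𝔞 (l + 1) (kernel (x • 𝟙 X)) :=
      ObjectProperty.prop_of_mono _ (kernel.ι (x • 𝟙 X)) hX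
    exact prop_extIdealFunctor_obj_of_kernel_of_cokernel (finiteByDimLT R k) hn hx𝔞 h
      (fun hK i ↦ ih𝔟 x hx𝔟 (radicalAnnihilated_sup_span hK𝔟 (smul_id_kernel_smul_id x X)) hKX hK i)
      (ih _ hx) i

lemma finiteByDimLT_extIdealFunctor_obj_of_lt {n : ℕ} (hn : n ≤ 2)
    (hX : finiteByDimLTIn 𝔞 (k + n) X)
    (h : ∀ i < n, finiteByDimLT R k ((extIdealFunctor 𝔞 i).obj X)) (i : ℕ) :
    finiteByDimLT R k ((extIdealFunctor 𝔞 i).obj X) := by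
  induction n generalizing X i with
  | zero => exact prop_extLinearFunctor_obj _ hX.2 _ i
  | succ n ih =>
    exact finiteByDimLT_extIdealFunctor_obj_of_radicalAnnihilated hn le_self_add
      (fun _ hY hY' i ↦ ih (by lia) hY hY' i) ⊥ bot_le hX (fun i hi ↦ h i (by lia)) i

section IsTwoConnected

variable {D : Type*} [Category* D] [Abelian D] {L : ModuleCat.{u} R ⥤ D} [L.Additive]
  [PreservesFiniteLimits L] [PreservesFiniteColimits L]
  (hL : ∀ X, IsZero (L.obj X) ↔ finiteByDimLT R k X) {A B : ModuleCat.{u} R} {f : A ⟶ B}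
include hL

lemma finiteByDimLT_extIdealFunctor_obj_zero_cokernel
    (hf : IsTwoConnected (fun i ↦ extIdealFunctor 𝔞 i ⋙ L) f)
    (hK : finiteByDimLTIn 𝔞 (k + 3) (kernel f)) :
    finiteByDimLT R (k + 1) ((extIdealFunctor 𝔞 0).obj (cokernel f)) := by
  let F (i : ℕ) := extIdealFunctor 𝔞 i ⋙ L
  have hK' (i : ℕ) (hi : i < 2) : finiteByDimLT R k ((extIdealFunctor 𝔞 i).obj (kernel f)) := by
    rw [← hL]
    obtain rfl | rfl : i = 0 ∨ i = 1 := by lia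
    · exact IsDeltaFunctor.isZero_obj_zero_kernel F (hf.mono zero_le_two)
    · exact IsDeltaFunctor.isZero_obj_one_kernel F (hf.epi zero_le_one) (hf.mono one_le_two)
  have hK'' := finiteByDimLT_extIdealFunctor_obj_of_lt (k := k + 1) le_rfl hK fun i hi ↦
    finiteByDimLT_mono k.le_succ (hK' i hi)
  obtain ⟨D', _, _, L', _, _, _, hL'⟩ :=
    exists_exact_functor_isZero_obj_iff (finiteByDimLT.{u, u} R (k + 1))
  have hLL' {Y} (h : IsZero (L.obj Y)) : IsZero (L'.obj Y) :=
    (hL' Y).2 (finiteByDimLT_mono k.le_succ ((hL Y).1 h))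
  refine (hL' _).1 (IsDeltaFunctor.isZero_obj_zero_cokernel (fun i ↦ extIdealFunctor 𝔞 i ⋙ L')
    ?_ ?_ ((hL' _).2 (hK'' 2)))
  · exact (epi_map_iff_isZero_obj_cokernel L' _).2
      (hLL' ((epi_map_iff_isZero_obj_cokernel L _).1 (hf.epi zero_le_one)))
  · exact (mono_map_iff_isZero_obj_kernel L' _).2
      (hLL' ((mono_map_iff_isZero_obj_kernel L _).1 (hf.mono one_le_two)))

lemma isIso_map_of_isTwoConnected_of_le
    (hf : IsTwoConnected (fun i ↦ extIdealFunctor 𝔞 i ⋙ L) f)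
    {𝔟 : Ideal R} (h𝔟 : 𝔞 ≤ 𝔟)
    (hK𝔟 : radicalAnnihilated 𝔟 (kernel f)) (hN𝔟 : radicalAnnihilated 𝔟 (cokernel f)) (i : ℕ) :
    IsIso ((extIdealFunctor 𝔞 i ⋙ L).map f) := by
  let F (i : ℕ) := extIdealFunctor 𝔞 i ⋙ L
  have hK' (i : ℕ) : IsZero ((F i).obj (kernel f)) :=
    (hL _).2 (prop_extIdealFunctor_obj_of_radicalAnnihilated _ h𝔟 hK𝔟 ((hL _).1
      (IsDeltaFunctor.isZero_obj_zero_kernel F (hf.mono zero_le_two))) i)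
  exact IsDeltaFunctor.isIso_map_of_isZero_kernel_of_isZero_cokernel F hK' (fun i ↦
    (hL _).2 (prop_extIdealFunctor_obj_of_radicalAnnihilated _ h𝔟 hN𝔟 ((hL _).1
      (IsDeltaFunctor.isZero_obj_zero_cokernel F (hf.epi zero_le_one) (hf.mono one_le_two)
        (hK' 2))) i)) i

lemma isIso_map_of_isTwoConnected (hf : IsTwoConnected (fun i ↦ extIdealFunctor 𝔞 i ⋙ L) f)
    (hK : finiteByDimLTIn 𝔞 (k + 3) (kernel f)) (hN : finiteByDimLTIn 𝔞 (k + 2) (cokernel f))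
    (𝔟 : Ideal R) (hK𝔟 : radicalAnnihilated 𝔟 (kernel f))
    (hN𝔟 : radicalAnnihilated 𝔟 (cokernel f)) (i : ℕ) :
    IsIso ((extIdealFunctor 𝔞 i ⋙ L).map f) := by
  let F (i : ℕ) := extIdealFunctor 𝔞 i ⋙ L
  induction 𝔟 using ideal_induction_of_not_le (𝔞 := 𝔞) generalizing A B f i with
  | le 𝔟 h𝔟 => exact isIso_map_of_isTwoConnected_of_le hL hf h𝔟 hK𝔟 hN𝔟 i
  | not_le 𝔟 h𝔟 ih =>
    have hK₀ : finiteByDimLT R k ((extIdealFunctor 𝔞 0).obj (kernel f)) :=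
      (hL _).1 (IsDeltaFunctor.isZero_obj_zero_kernel F (hf.mono zero_le_two))
    obtain ⟨x, hx𝔞, hx𝔟, hxK, hxN⟩ := ((holdsGenerically_finiteByDimLTIn_cokernel hK
      (finiteByDimLT_mono le_self_add hK₀)).and (holdsGenerically_finiteByDimLTIn_cokernel hN
      (finiteByDimLT_extIdealFunctor_obj_zero_cokernel hL hf hK))).exists_mem_notMem h𝔟
    have map_smul_id (Y) (i : ℕ) : (F i).map (x • 𝟙 Y) = 0 := by
      rw [Functor.comp_map, extIdealFunctor_map_smul_id hx𝔞, L.map_zero]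
    obtain ⟨P, p, q, g, hP, hgp, hgq⟩ := exists_isPullback_smul_id x f
    have hgK : (finiteByDimLTIn 𝔞 (k + 3) ⊓ radicalAnnihilated 𝔟) (kernel g) :=
      prop_kernel_of_comp_eq _ hgq ⟨hK, hK𝔟⟩
    have hgN : (finiteByDimLTIn 𝔞 (k + 2) ⊓ radicalAnnihilated 𝔟) (cokernel g) :=
      prop_cokernel_of_isPullback _ hP hgq hgp
        ⟨hxK, ObjectProperty.prop_of_epi _ (cokernel.π _) hK𝔟⟩ ⟨hN, hN𝔟⟩
    refine hf.isIso_map_of_isPullback hP (map_smul_id B) (map_smul_id A) hgq hgp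
      (ih x hx𝔟 (hf.of_isPullback hP (map_smul_id B) hgq) hgK.1 hgN.1
        (radicalAnnihilated_sup_span hgK.2 (kernel_smul_id_eq_zero hgp))
        (radicalAnnihilated_sup_span hgN.2
          (cokernel_smul_id_eq_zero (fst_comp_eq_smul_id hP hgq hgp)))) (fun h₀ i ↦ (hL _).2 ?_) i
    have hE : finiteByDimLTIn 𝔞 (k + 1) (cokernel (biprod.desc f (-(x • 𝟙 B)))) :=
      prop_cokernel_desc_neg_smul_id (x := x) (f := f) _ hxN
    refine finiteByDimLT_extIdealFunctor_obj_of_lt one_le_two hE (fun i hi ↦ ?_) i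
    obtain rfl : i = 0 := by lia
    exact (hL _).1 h₀

end IsTwoConnected

theorem finiteByDimLT_extIdealFunctor_obj (hX : finiteByDimLTIn 𝔞 (k + 3) X)
    (h : ∀ i ≤ 2, finiteByDimLT R k ((extIdealFunctor 𝔞 i).obj X)) (i : ℕ) :
    finiteByDimLT R k ((extIdealFunctor 𝔞 i).obj X) := by
  obtain ⟨D, _, _, L, _, _, _, hL⟩ := exists_exact_functor_isZero_obj_iff
    (finiteByDimLT.{u, u} R k)
  let F (i : ℕ) := extIdealFunctor 𝔞 i ⋙ L
  have hF₀ (i : ℕ) : IsZero ((F i).obj (0 : ModuleCat R)) := (F i).map_isZero (isZero_zero _)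
  have hFX (i : ℕ) (hi : i ≤ 2) : IsZero ((F i).obj X) := (hL _).2 (h i hi)
  have hf : IsTwoConnected F (0 : X ⟶ 0) :=
    ⟨(hFX 0 (by lia)).isIso (hF₀ 0) _, (hFX 1 (by lia)).isIso (hF₀ 1) _, (hFX 2 le_rfl).mono _⟩
  have := isIso_map_of_isTwoConnected hL hf (ObjectProperty.prop_of_mono _ (kernel.ι _) hX)
    (ObjectProperty.prop_of_isZero _ (.of_epi (cokernel.π _) (isZero_zero _)))
    ⊥ bot_le bot_le i
  exact (hL _).1 ((hF₀ i).of_iso (asIso ((F i).map (0 : X ⟶ 0))))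

theorem isCofinite_iff_of_moduleDim_le_two_general (𝔞 : Ideal R) (M : ModuleCat.{u} R)
    (hM : MemFD R 2 M) :
    IsCofinite 𝔞 M ↔
      (Module.support R M ⊆ PrimeSpectrum.zeroLocus (𝔞 : Set R) ∧
        ∀ i : ℕ, i ≤ 2 → Module.Finite R (extIdeal 𝔞 i M)) := by
  refine ⟨fun ⟨hsupp, h⟩ ↦ ⟨hsupp, fun i _ ↦ h i⟩, fun ⟨hsupp, h⟩ ↦ ⟨hsupp, ?_⟩⟩
  simp only [finite_extIdeal_iff] at h ⊢
  exact finiteByDimLT_extIdealFunctor_obj ⟨hsupp, hM.finiteByDimLT⟩ h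

end Cofinite

/-- Yang–Shen, Lemma 2.1: for an `R`-module `M` with `dim_R M ≤ 2`, `M` is `𝔞`-cofinite if and
only if `Supp_R M ⊆ V(𝔞)` and `Ext^i_R(R/𝔞, M)` is finitely generated for `i = 0, 1, 2`. -/
theorem isCofinite_iff_of_moduleDim_le_two
    {R : Type u} [CommRing R] [IsNoetherianRing R] (𝔞 : Ideal R)
    (M : ModuleCat.{u} R) (hM : moduleDim R M ≤ 2) :
    IsCofinite 𝔞 M ↔
      (Module.support R M ⊆ PrimeSpectrum.zeroLocus (𝔞 : Set R) ∧
        ∀ i : ℕ, i ≤ 2 → Module.Finite R (extIdeal 𝔞 i M)) :=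
  isCofinite_iff_of_moduleDim_le_two_general 𝔞 M
    ⟨⊥, Submodule.fg_bot,
      (Module.supportDim_eq_of_equiv (Submodule.quotEquivOfEqBot ⊥ rfl)).trans_le hM⟩
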